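/- arXiv:1908.06878 — 4 statements merged into one kernel-verified Lean document; each statement's English description precedes it below -/
import Mathlib

section
/- Let g ≥ 0 and n ≥ 1. The assignments β_i ↦ s_{g+i} for 1 ≤ i ≤ n−1 and τ_j ↦ A_j := (s_g s_{g−1} ⋯ s_{j+1}) s_j² (s_{j+1}^{−1} s_{j+2}^{−1} ⋯ s_g^{−1}) for 1 ≤ j ≤ g (with A_g = s_g²) extend to a well-defined group homomorphism φ_{g,n} : H_{g,n} → B_{g+n}; that is, the specified images in B_{g+n} satisfy all the defining relations of H_{g,n}. -/
/-!
The Artin braid group `B m` on `m` strands, presented with generators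
`s_1, ..., s_{m-1}` (indexed here by `Fin (m-1)`, with `braidGen k` representing
`s_{k+1}`), and the handlebody braid group `H_{g,n}` presented with braid
generators `β_1, ..., β_{n-1}` and twist generators `τ_1, ..., τ_g`
(indexed by `Fin (n-1)` and `Fin g` respectively).

STATEMENT 0: the assignments `β_i ↦ s_{g+i}` and
`τ_j ↦ (s_g ⋯ s_{j+1}) s_j² (s_{j+1}⁻¹ ⋯ s_g⁻¹)` extend to a group
homomorphism `H_{g,n} →* B_{g+n}`.
-/

/-- The braid relations on `d` generators. -/
def braidRels (d : ℕ) : Set (FreeGroup (Fin d)) :=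
  {r | ∃ i j : Fin d,
    (i.val + 1 = j.val ∧
      r = FreeGroup.of i * FreeGroup.of j * FreeGroup.of i *
          (FreeGroup.of j * FreeGroup.of i * FreeGroup.of j)⁻¹) ∨
    (i.val + 2 ≤ j.val ∧
      r = FreeGroup.of i * FreeGroup.of j * (FreeGroup.of j * FreeGroup.of i)⁻¹)}

/-- The Artin braid group on `m` strands, with generators `s_1, ..., s_{m-1}`. -/
abbrev BraidGroup (m : ℕ) := PresentedGroup (braidRels (m - 1))

/-- The generator `s_{k+1}` of the braid group (`k` is a `0`-based index). -/
def braidGen {m : ℕ} (k : Fin (m - 1)) : BraidGroup m := PresentedGroup.of k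

/-- The defining relations of the handlebody braid group `H_{g,n}`:
the braid relations among the `β`'s, the relations
`β_1 τ_i β_1 τ_i = τ_i β_1 τ_i β_1`, `β_i τ_j = τ_j β_i` for `i ≥ 2`, and
`(β_1 τ_i β_1⁻¹) τ_j = τ_j (β_1 τ_i β_1⁻¹)` for `i < j`.
Here `Sum.inl i` represents `β_{i+1}` and `Sum.inr j` represents `τ_{j+1}`. -/
def handlebodyRels (g n : ℕ) : Set (FreeGroup (Fin (n - 1) ⊕ Fin g)) :=
  {r |
    (∃ i j : Fin (n - 1),
      (i.val + 1 = j.val ∧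
        r = FreeGroup.of (.inl i) * FreeGroup.of (.inl j) * FreeGroup.of (.inl i) *
            (FreeGroup.of (.inl j) * FreeGroup.of (.inl i) * FreeGroup.of (.inl j))⁻¹) ∨
      (i.val + 2 ≤ j.val ∧
        r = FreeGroup.of (.inl i) * FreeGroup.of (.inl j) *
            (FreeGroup.of (.inl j) * FreeGroup.of (.inl i))⁻¹)) ∨
    (∃ (b : Fin (n - 1)) (i : Fin g), b.val = 0 ∧
      r = FreeGroup.of (.inl b) * FreeGroup.of (.inr i) * FreeGroup.of (.inl b) *
            FreeGroup.of (.inr i) *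
          (FreeGroup.of (.inr i) * FreeGroup.of (.inl b) * FreeGroup.of (.inr i) *
            FreeGroup.of (.inl b))⁻¹) ∨
    (∃ (b : Fin (n - 1)) (j : Fin g), 1 ≤ b.val ∧
      r = FreeGroup.of (.inl b) * FreeGroup.of (.inr j) *
          (FreeGroup.of (.inr j) * FreeGroup.of (.inl b))⁻¹) ∨
    (∃ (b : Fin (n - 1)) (i j : Fin g), b.val = 0 ∧ i.val < j.val ∧
      r = (FreeGroup.of (.inl b) * FreeGroup.of (.inr i) * (FreeGroup.of (.inl b))⁻¹) *
            FreeGroup.of (.inr j) *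
          (FreeGroup.of (.inr j) *
            (FreeGroup.of (.inl b) * FreeGroup.of (.inr i) * (FreeGroup.of (.inl b))⁻¹))⁻¹)}

/-- The handlebody braid group `H_{g,n}`. -/
abbrev HandlebodyBraidGroup (g n : ℕ) := PresentedGroup (handlebodyRels g n)

/-- The braid generator `β_{i+1}` of `H_{g,n}`. -/
def hβ {g n : ℕ} (i : Fin (n - 1)) : HandlebodyBraidGroup g n :=
  PresentedGroup.of (Sum.inl i)

/-- The twist generator `τ_{j+1}` of `H_{g,n}`. -/
def hτ {g n : ℕ} (j : Fin g) : HandlebodyBraidGroup g n :=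
  PresentedGroup.of (Sum.inr j)

/-!
Write `A_j^p = (s_p ⋯ s_{j+1}) s_j² (s_p ⋯ s_{j+1})⁻¹`, so that `A_j^{p+1}` is the conjugate of
`A_j^p` by `s_{p+1}`. The braid relation says that `s_{p+1} s_{p+2}` conjugates `s_{p+1}` to
`s_{p+2}`; since `s_{p+2}` commutes with `A_j^p`, it also conjugates `A_j^p` to `A_j^{p+1}`. Hence
the relation `β τ β τ = τ β τ β` for `(s_{p+1}, A_j^p)` implies the one for `(s_{p+2}, A_j^{p+1})`,
and it suffices to check it for `(s_{j+1}, s_j²)`. Similarly, `s_{k+1} s_k` conjugates the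
commuting pair `(s_{k+1}, A_j^{k-1})` to `(s_k, A_j^{k+1})`, so every `s_k` with `j < k < p`
commutes with `A_j^p`. For `i < j` the element `s_{p+1} A_i^p s_{p+1}⁻¹ = A_i^{p+1}` therefore
commutes with all the letters `s_j, …, s_p` of `A_j^p`.
-/

section BraidRelation

theorem commute_mul_sq_mul_of_braid {M : Type*} [Monoid M] {a b : M}
    (hab : a * b * a = b * a * b) : Commute (b * a ^ 2 * b) a := by
  change b * a ^ 2 * b * a = a * (b * a ^ 2 * b)
  calc b * a ^ 2 * b * a = b * a * (a * b * a) := by simp only [pow_two, mul_assoc]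
    _ = b * a * b * (a * b) := by rw [hab]; simp only [mul_assoc]
    _ = a * (b * a ^ 2 * b) := by rw [← hab]; simp only [pow_two, mul_assoc]

variable {G : Type*} [Group G] {a b c : G}

theorem commute_conj_conj_of_braid (hbc : b * c * b = c * b * c) (hca : Commute c a) :
    Commute b (c * (b * a * b⁻¹) * c⁻¹) := by
  have conj_c : c * b * c * (c * b)⁻¹ = b := by rw [← hbc]; group
  have conj_a : c * b * a * (c * b)⁻¹ = c * (b * a * b⁻¹) * c⁻¹ := by group
  rw [← conj_a]
  nth_rw 1 [← conj_c]
  exact (Commute.conj_iff (c * b)).2 hca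

theorem commute_mul_conj_mul_of_braid (hbc : b * c * b = c * b * c) (hca : Commute c a)
    (hba : Commute (b * a * b) a) : Commute (c * (b * a * b⁻¹) * c) (b * a * b⁻¹) := by
  have conj_b : b * c * b * (b * c)⁻¹ = c := by rw [hbc]; group
  have conj_a : b * c * a * (b * c)⁻¹ = b * a * b⁻¹ := by rw [mul_assoc b c a, hca.eq]; group
  have conj_bab : b * c * (b * a * b) * (b * c)⁻¹ = c * (b * a * b⁻¹) * c := by
    calc b * c * (b * a * b) * (b * c)⁻¹
      _ = (b * c * b * (b * c)⁻¹) * (b * c * a * (b * c)⁻¹) * (b * c * b * (b * c)⁻¹) := by group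
      _ = c * (b * a * b⁻¹) * c := by rw [conj_b, conj_a]
  rw [← conj_bab, ← conj_a]
  exact (Commute.conj_iff (b * c)).2 hba

end BraidRelation

/-- The family `s 0, …, s (d - 1)` satisfies the relations of the standard generators of the braid
group on `d + 1` strands. Indexing by `ℕ` instead of `Fin d` keeps index arithmetic free of bounds;
nothing is required of the values `s k` with `d ≤ k`. -/
structure SatisfiesBraidRelations {M : Type*} [Mul M] (s : ℕ → M) (d : ℕ) : Prop where
  braid : ∀ k, k + 1 < d → s k * s (k + 1) * s k = s (k + 1) * s k * s (k + 1)
  comm : ∀ i j, i + 2 ≤ j → j < d → Commute (s i) (s j)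

section BraidTwist

variable {G : Type*} [Group G]

/-- The pure braid `(s_p ⋯ s_{j+1}) s_j² (s_p ⋯ s_{j+1})⁻¹`. With the `0`-based indices used here,
the paper's `A_j` is `braidTwist s (j - 1) (g - 1)`. -/
def braidTwist (s : ℕ → G) (j p : ℕ) : G :=
  ((List.range (p - j)).map fun t => s (p - t)).prod * s j ^ 2 *
    ((List.range (p - j)).map fun t => s (p - t)).prod⁻¹

variable {s : ℕ → G} {d i j k p : ℕ}

@[simp]
theorem braidTwist_self (s : ℕ → G) (j : ℕ) : braidTwist s j j = s j ^ 2 := by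
  simp [braidTwist]

theorem braidTwist_succ (s : ℕ → G) (hjp : j ≤ p) :
    braidTwist s j (p + 1) = s (p + 1) * braidTwist s j p * (s (p + 1))⁻¹ := by
  have prod_succ : ((List.range (p + 1 - j)).map fun t => s (p + 1 - t)).prod =
      s (p + 1) * ((List.range (p - j)).map fun t => s (p - t)).prod := by
    simp [Nat.sub_add_comm hjp, List.range_succ_eq_map, Function.comp_def]
  rw [braidTwist, prod_succ, braidTwist]
  group

theorem commute_braidTwist {x : G} (hjp : j ≤ p)
    (h : ∀ k, j ≤ k → k ≤ p → Commute x (s k)) : Commute x (braidTwist s j p) := by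
  induction p, hjp using Nat.le_induction with
  | base => simpa only [braidTwist_self] using (h j le_rfl le_rfl).pow_right 2
  | succ p hjp ih =>
    have top : Commute x (s (p + 1)) := h (p + 1) (by omega) le_rfl
    rw [braidTwist_succ s hjp]
    exact (top.mul_right (ih fun k hjk hkp => h k hjk (by omega))).mul_right top.inv_right

namespace SatisfiesBraidRelations

theorem commute_braidTwist_of_add_two_le (hs : SatisfiesBraidRelations s d) (hjp : j ≤ p)
    (hpk : p + 2 ≤ k) (hkd : k < d) : Commute (s k) (braidTwist s j p) :=
  commute_braidTwist hjp fun i _ hip => (hs.comm i k (by omega) hkd).symm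

theorem commute_braidTwist_of_lt_of_lt (hs : SatisfiesBraidRelations s d) (hjk : j < k)
    (hkp : k < p) (hpd : p < d) : Commute (s k) (braidTwist s j p) := by
  induction p, Nat.succ_le_of_lt hkp using Nat.le_induction with
  | base =>
    obtain ⟨q, rfl⟩ : ∃ q, k = q + 1 := ⟨k - 1, by omega⟩
    rw [braidTwist_succ s (by omega), braidTwist_succ s (by omega)]
    exact commute_conj_conj_of_braid (hs.braid (q + 1) hpd)
      (hs.commute_braidTwist_of_add_two_le (by omega) le_rfl hpd)
  | succ p hkp ih =>
    have top : Commute (s k) (s (p + 1)) := hs.comm k (p + 1) (by omega) hpd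
    rw [braidTwist_succ s (by omega)]
    exact (top.mul_right (ih (by omega) (by omega))).mul_right top.inv_right

theorem commute_mul_braidTwist_mul (hs : SatisfiesBraidRelations s d) (hjp : j ≤ p)
    (hpd : p + 1 < d) :
    Commute (s (p + 1) * braidTwist s j p * s (p + 1)) (braidTwist s j p) := by
  induction p, hjp using Nat.le_induction with
  | base =>
    rw [braidTwist_self]
    exact (commute_mul_sq_mul_of_braid (hs.braid j hpd)).pow_right 2
  | succ p hjp ih =>
    rw [braidTwist_succ s hjp]
    exact commute_mul_conj_mul_of_braid (hs.braid (p + 1) hpd)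
      (hs.commute_braidTwist_of_add_two_le hjp le_rfl hpd) (ih (by omega))

theorem commute_conj_braidTwist (hs : SatisfiesBraidRelations s d) (hij : i < j) (hjp : j ≤ p)
    (hpd : p + 1 < d) :
    Commute (s (p + 1) * braidTwist s i p * (s (p + 1))⁻¹) (braidTwist s j p) := by
  rw [← braidTwist_succ s (by omega)]
  exact commute_braidTwist hjp fun k hjk hkp =>
    (hs.commute_braidTwist_of_lt_of_lt (by omega) (by omega) hpd).symm

end SatisfiesBraidRelations

end BraidTwist

namespace HandlebodyBraidGroup

variable {G : Type*} [Group G]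

/-- The images of the generators of `H_{g,n}` in a group with a sequence `s` of braid generators:
`β_i` goes to `s_{g+i}` and `τ_j` to the paper's `A_j`. -/
def generatorImage (s : ℕ → G) (g n : ℕ) : Fin (n - 1) ⊕ Fin g → G :=
  Sum.elim (fun i => s (g + i)) fun j => braidTwist s j (g - 1)

variable {s : ℕ → G} {g n : ℕ}

theorem lift_generatorImage_eq_one (hs : SatisfiesBraidRelations s (g + n - 1)) :
    ∀ r ∈ handlebodyRels g n, FreeGroup.lift (generatorImage s g n) r = 1 := by
  have le_pred (i : Fin g) : i.val ≤ g - 1 := Nat.le_sub_one_of_lt i.isLt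
  have index_eq {b : Fin (n - 1)} (i : Fin g) (hb : b.val = 0) : g + b.val = g - 1 + 1 := by
    have := i.pos
    omega
  have succ_lt (b : Fin (n - 1)) (i : Fin g) : g - 1 + 1 < g + n - 1 := by
    have := b.pos
    have := i.pos
    omega
  rintro r (⟨i, j, ⟨hij, rfl⟩ | ⟨hij, rfl⟩⟩ | ⟨b, i, hb, rfl⟩ | ⟨b, j, hb, rfl⟩ |
    ⟨b, i, j, hb, hij, rfl⟩)
  all_goals
    simp only [map_mul, map_inv, mul_inv_eq_one, FreeGroup.lift_apply_of, generatorImage,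
      Sum.elim_inl, Sum.elim_inr]
  · rw [← hij]
    exact hs.braid (g + i) (by omega)
  · exact hs.comm _ _ (by omega) (by omega)
  · rw [index_eq i hb]
    have comm := hs.commute_mul_braidTwist_mul (le_pred i) (succ_lt b i)
    simpa only [mul_assoc] using comm.eq
  · have := j.pos
    exact hs.commute_braidTwist_of_add_two_le (le_pred j) (by omega) (by omega)
  · rw [index_eq i hb]
    exact hs.commute_conj_braidTwist hij (le_pred j) (succ_lt b j)

/-- The homomorphism `H_{g,n} → G` induced by elements `s_1, …, s_{g+n-1}` of `G` satisfying the
braid relations. -/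
def ofBraidRelations (hs : SatisfiesBraidRelations s (g + n - 1)) : HandlebodyBraidGroup g n →* G :=
  PresentedGroup.toGroup (lift_generatorImage_eq_one hs)

@[simp]
theorem ofBraidRelations_hβ (hs : SatisfiesBraidRelations s (g + n - 1)) (i : Fin (n - 1)) :
    ofBraidRelations hs (hβ i) = s (g + i) :=
  PresentedGroup.toGroup.of _

@[simp]
theorem ofBraidRelations_hτ (hs : SatisfiesBraidRelations s (g + n - 1)) (j : Fin g) :
    ofBraidRelations hs (hτ j) = braidTwist s j (g - 1) :=
  PresentedGroup.toGroup.of _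

end HandlebodyBraidGroup

section BraidGroup

variable {m : ℕ}

theorem braidGen_braid {i j : Fin (m - 1)} (hij : i.val + 1 = j.val) :
    (braidGen i * braidGen j * braidGen i : BraidGroup m) =
      braidGen j * braidGen i * braidGen j :=
  PresentedGroup.mk_eq_mk_of_mul_inv_mem ⟨i, j, .inl ⟨hij, rfl⟩⟩

theorem commute_braidGen {i j : Fin (m - 1)} (hij : i.val + 2 ≤ j.val) :
    Commute (braidGen i : BraidGroup m) (braidGen j) :=
  PresentedGroup.mk_eq_mk_of_mul_inv_mem ⟨i, j, .inr ⟨hij, rfl⟩⟩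

/-- The sequence of generators `s_1, …, s_{m-1}` of the braid group, extended to all `0`-based
indices by the junk value `1`. -/
def braidGenSeq (m k : ℕ) : BraidGroup m :=
  if h : k < m - 1 then braidGen ⟨k, h⟩ else 1

theorem braidGenSeq_of_lt {k : ℕ} (h : k < m - 1) : braidGenSeq m k = braidGen ⟨k, h⟩ :=
  dif_pos h

theorem satisfiesBraidRelations_braidGenSeq (m : ℕ) :
    SatisfiesBraidRelations (braidGenSeq m) (m - 1) where
  braid k h := by
    rw [braidGenSeq_of_lt h, braidGenSeq_of_lt (Nat.lt_of_succ_lt h)]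
    exact braidGen_braid rfl
  comm i j hij h := by
    rw [braidGenSeq_of_lt h, braidGenSeq_of_lt (by omega : i < m - 1)]
    exact commute_braidGen hij

end BraidGroup

/-- for `g ≥ 0` and `n ≥ 1`, the assignments `β_i ↦ s_{g+i}` and
`τ_j ↦ A_j = (s_g s_{g-1} ⋯ s_{j+1}) s_j² (s_{j+1}⁻¹ s_{j+2}⁻¹ ⋯ s_g⁻¹)`
extend to a well-defined group homomorphism `φ_{g,n} : H_{g,n} →* B_{g+n}`.
(Indices of generators are `0`-based: `braidGen ⟨k, _⟩` is `s_{k+1}`, `hβ i` is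
`β_{i+1}` and `hτ j` is `τ_{j+1}`.) -/
theorem handlebody_braid_group_maps_to_braid_group (g n : ℕ) (hn : 1 ≤ n) :
    ∃ φ : HandlebodyBraidGroup g n →* BraidGroup (g + n),
      (∀ i : Fin (n - 1), φ (hβ i) = braidGen ⟨g + i.val, by have := i.isLt; omega⟩) ∧
      (∀ j : Fin g,
        φ (hτ j) =
          (((List.range (g - 1 - j.val)).map
              (fun t => braidGen (m := g + n) ⟨g - 1 - t, by have := j.isLt; omega⟩)).prod) *
            braidGen (m := g + n) ⟨j.val, by have := j.isLt; omega⟩ ^ 2 *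
          (((List.range (g - 1 - j.val)).map
              (fun t => braidGen (m := g + n) ⟨g - 1 - t, by have := j.isLt; omega⟩)).prod)⁻¹) := by
  refine ⟨HandlebodyBraidGroup.ofBraidRelations (satisfiesBraidRelations_braidGenSeq (g + n)),
    fun i => ?_, fun j => ?_⟩
  · rw [HandlebodyBraidGroup.ofBraidRelations_hβ, braidGenSeq_of_lt]
  · simp only [HandlebodyBraidGroup.ofBraidRelations_hτ, braidTwist, ← braidGenSeq_of_lt]
end

section
/- Let g ≥ 0 and n ≥ 1. The group homomorphism φ_{g,n} : H_{g,n} → B_{g+n} determined by β_i ↦ s_{g+i} (1 ≤ i ≤ n−1) and τ_j ↦ (s_g s_{g−1} ⋯ s_{j+1}) s_j² (s_{j+1}^{−1} ⋯ s_g^{−1}) (1 ≤ j ≤ g) is injective; i.e., the handlebody braid group H_{g,n} embeds as a subgroup of the Artin braid group B_{g+n}. -/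
/-!
The homomorphism `φ_{g,n}` is a composite of homomorphisms `ψ : H_{g+1,n} → H_{g,n+1}` that turn the
last handle into the first strand: `β_i ↦ β_{i+1}`, `τ_j ↦ β_1 τ_j β_1⁻¹` for `j ≤ g`, and
`τ_{g+1} ↦ β_1²`. After all handles are used up one is left with `H_{0,g+n} = B_{g+n}`.

To see that `ψ` is injective, picture its image as the stabilizer of the first strand and let
`H_{g,n+1}` act on what would be the induced set, `{0, …, n} × H_{g+1,n}`. The first coordinate is
the position of the strand that stands for the handle, `β_i` interchanges the positions `i - 1` and
`i`, and over the position `0` the element `ψ(h)` acts by left translation by `h`. For this the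
twist `τ_j` has to act over the position `0` by the automorphism of `H_{g+1,n}` that pushes the loop
`τ_j` once around the loop `τ_{g+1}`, which comes from the Hurwitz action on the twists. The image
of `(0, 1)` under `ψ(h)` is `(0, h)`, so it recovers `h`.
-/

namespace HandlebodyBraid

section FourBraid

variable {A : Type*} [Group A] {b c s t u x : A}

/-- The Artin relation of length four, which `β_1` satisfies with every twist generator. -/
def FourBraid (b s : A) : Prop := b * s * b * s = s * b * s * b

/-- The relation between `b = β_1` and the twists `s = τ_i`, `t = τ_j` for `i < j`. It is not
symmetric in `s` and `t`. -/
def Unlinked (b s t : A) : Prop := Commute (b * s * b⁻¹) t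

theorem fourBraid_iff_commute : FourBraid b s ↔ Commute (b * s * b) s := by
  simp only [FourBraid, Commute, SemiconjBy, mul_assoc]

theorem FourBraid.conj (h : FourBraid b s) (c : A) :
    FourBraid (c * b * c⁻¹) (c * s * c⁻¹) := by
  rw [fourBraid_iff_commute] at h ⊢
  convert (Commute.conj_iff c).2 h using 1
  group

theorem FourBraid.inv (h : FourBraid b s) : FourBraid b⁻¹ s⁻¹ := by
  rw [fourBraid_iff_commute] at h ⊢
  simpa only [mul_inv_rev, mul_assoc] using h.inv_inv

theorem FourBraid.conj_conj_eq (h : FourBraid b t) :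
    t * (b * t * b⁻¹) * t⁻¹ = b⁻¹ * t * b := by
  calc t * (b * t * b⁻¹) * t⁻¹ = b⁻¹ * (b * t * b * t) * b⁻¹ * t⁻¹ := by group
    _ = b⁻¹ * (t * b * t * b) * b⁻¹ * t⁻¹ := by rw [h]
    _ = b⁻¹ * t * b := by group

theorem unlinked_iff_commute_inv_conj : Unlinked b s t ↔ Commute s (b⁻¹ * t * b) := by
  rw [Unlinked, ← Commute.conj_iff b⁻¹]
  simp only [mul_assoc, inv_inv, inv_mul_cancel_left, inv_mul_cancel, mul_one]

theorem Unlinked.inv (h : Unlinked b s t) : Unlinked b⁻¹ t⁻¹ s⁻¹ := by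
  rw [unlinked_iff_commute_inv_conj] at h
  simpa only [Unlinked, mul_inv_rev, inv_inv, mul_assoc] using h.inv_inv.symm

theorem Unlinked.hurwitz (ht : FourBraid b t) (h : Unlinked b s t) :
    Unlinked b t (t⁻¹ * s * t) := by
  rw [unlinked_iff_commute_inv_conj, ← ht.conj_conj_eq, ← Commute.conj_iff t⁻¹] at h
  rw [Unlinked]
  convert h.symm using 1 <;> group

/-- Conjugation by `(t * b)⁻¹` sends the pair `b`, `b * s * b⁻¹` to `t * b * t⁻¹`, `s`. -/
theorem FourBraid.hurwitz (hs : FourBraid b s) (ht : FourBraid b t) (h : Unlinked b s t) :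
    FourBraid b (t⁻¹ * s * t) := by
  have conj_b : (t * b)⁻¹ * b * (t * b)⁻¹⁻¹ = t * b * t⁻¹ := by
    calc (t * b)⁻¹ * b * (t * b)⁻¹⁻¹ = b⁻¹ * t⁻¹ * (b * t * b * t) * t⁻¹ := by group
      _ = b⁻¹ * t⁻¹ * (t * b * t * b) * t⁻¹ := by rw [ht]
      _ = t * b * t⁻¹ := by group
  have conj_s : (t * b)⁻¹ * (b * s * b⁻¹) * (t * b)⁻¹⁻¹ = s := by
    calc (t * b)⁻¹ * (b * s * b⁻¹) * (t * b)⁻¹⁻¹ = b⁻¹ * (t⁻¹ * ((b * s * b⁻¹) * t)) * b := by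
          group
      _ = b⁻¹ * (t⁻¹ * (t * (b * s * b⁻¹))) * b := by rw [h.eq]
      _ = s := by group
  have hbs : FourBraid b (b * s * b⁻¹) := by simpa only [mul_inv_cancel_right] using hs.conj b
  have key : FourBraid (t * b * t⁻¹) s := by
    simpa only [conj_b, conj_s] using hbs.conj (t * b)⁻¹
  convert key.conj t⁻¹ using 1 <;> group

theorem Unlinked.hurwitz_inv (hs : FourBraid b s) (h : Unlinked b s t) :
    Unlinked b (s * t * s⁻¹) s := by
  convert (h.inv.hurwitz hs.inv).inv using 1 <;> group

theorem FourBraid.hurwitz_inv (hs : FourBraid b s) (ht : FourBraid b t) (h : Unlinked b s t) :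
    FourBraid b (s * t * s⁻¹) := by
  convert (ht.inv.hurwitz hs.inv h.inv).inv using 1 <;> group

theorem commute_of_mem_closure_pair (hs : Commute x s) (ht : Commute x t)
    (hu : u ∈ Subgroup.closure {s, t}) : Commute x u := by
  have hle : Subgroup.closure {s, t} ≤ Subgroup.centralizer {x} := by
    rw [Subgroup.closure_le, Set.pair_subset_iff]
    simpa only [SetLike.mem_coe, Subgroup.mem_centralizer_singleton_iff] using
      ⟨hs.eq.symm, ht.eq.symm⟩
  exact (Subgroup.mem_centralizer_singleton_iff.1 (hle hu)).symm

theorem commute_conj_conj_of_braid (h : b * c * b = c * b * c) (ht : Commute c t) :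
    Commute b (c * (b * t * b⁻¹) * c⁻¹) := by
  have hb : b * (c * b) = c * b * c := by rw [← mul_assoc, h]
  have key : Commute (c * b * c * (c * b)⁻¹) (c * b * t * (c * b)⁻¹) :=
    (Commute.conj_iff (c * b)).2 ht
  rw [← hb, mul_inv_cancel_right] at key
  convert key using 1
  group

theorem FourBraid.conj_of_braid (h : b * c * b = c * b * c) (ht : Commute c t)
    (hbt : FourBraid b t) : FourBraid c (b * t * b⁻¹) := by
  have hc : b * (c * b * c⁻¹) * b⁻¹ = c := by
    calc b * (c * b * c⁻¹) * b⁻¹ = (b * c * b) * c⁻¹ * b⁻¹ := by group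
      _ = c := by rw [h]; group
  simpa only [hc, ht.eq, mul_inv_cancel_right] using (hbt.conj c).conj b

theorem FourBraid.sq_of_braid (h : b * c * b = c * b * c) : FourBraid c (b ^ 2) := by
  have key : Commute (c * b ^ 2 * c) b := by
    calc c * b ^ 2 * c * b = c * b * (b * c * b) := by simp only [pow_two, mul_assoc]
      _ = (c * b * c) * b * c := by rw [h]; simp only [mul_assoc]
      _ = b * (c * b ^ 2 * c) := by rw [← h]; simp only [pow_two, mul_assoc]
  exact fourBraid_iff_commute.2 (key.pow_right 2)

end FourBraid

section Relations

variable {A : Type*} [Group A] {g k : ℕ} {β τ : ℕ → A}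

/-- The relations of the braid group between `β 0, …, β (k - 1)`. The families are indexed by `ℕ`
to keep index arithmetic out of the types; the terms from `k` on are arbitrary. -/
structure BraidRel (k : ℕ) (β : ℕ → A) : Prop where
  braid : ∀ i, i + 1 < k → β i * β (i + 1) * β i = β (i + 1) * β i * β (i + 1)
  comm : ∀ i j, i + 2 ≤ j → j < k → Commute (β i) (β j)

/-- The relations of the handlebody braid group `H_{g,k+1}` between `β 0, …, β (k - 1)` and
`τ 0, …, τ (g - 1)`. -/
structure HandlebodyRel (g k : ℕ) (β τ : ℕ → A) : Prop extends BraidRel k β where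
  fourBraid : ∀ i, 0 < k → i < g → FourBraid (β 0) (τ i)
  comm_twist : ∀ i j, 1 ≤ i → i < k → j < g → Commute (β i) (τ j)
  unlinked : ∀ i j, 0 < k → i < j → j < g → Unlinked (β 0) (τ i) (τ j)

theorem HandlebodyRel.update_pair (H : HandlebodyRel g k β τ) {i : ℕ} (hi : i + 1 < g) {s t : A}
    (hs : s ∈ Subgroup.closure {τ i, τ (i + 1)}) (ht : t ∈ Subgroup.closure {τ i, τ (i + 1)})
    (fs : 0 < k → FourBraid (β 0) s) (ft : 0 < k → FourBraid (β 0) t)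
    (hst : 0 < k → Unlinked (β 0) s t) :
    HandlebodyRel g k β (Function.update (Function.update τ i s) (i + 1) t) := by
  have comm_left {p u} (hp : 1 ≤ p) (hpk : p < k) (hu : u ∈ Subgroup.closure {τ i, τ (i + 1)}) :
      Commute (β p) u :=
    commute_of_mem_closure_pair (H.comm_twist _ _ hp hpk (by omega))
      (H.comm_twist _ _ hp hpk hi) hu
  have unlinked_before {p u} (hk : 0 < k) (hp : p < i)
      (hu : u ∈ Subgroup.closure {τ i, τ (i + 1)}) : Unlinked (β 0) (τ p) u :=
    commute_of_mem_closure_pair (H.unlinked _ _ hk hp (by omega))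
      (H.unlinked _ _ hk (by omega) hi) hu
  have unlinked_after {q u} (hk : 0 < k) (hq : i + 1 < q) (hqg : q < g)
      (hu : u ∈ Subgroup.closure {τ i, τ (i + 1)}) : Unlinked (β 0) u (τ q) :=
    unlinked_iff_commute_inv_conj.2 (commute_of_mem_closure_pair
      (unlinked_iff_commute_inv_conj.1 (H.unlinked i q hk (by omega) hqg)).symm
      (unlinked_iff_commute_inv_conj.1 (H.unlinked (i + 1) q hk hq hqg)).symm hu).symm
  refine ⟨H.toBraidRel, fun p hk hp => ?_, fun p q hp hpk hq => ?_, fun p q hk hpq hq => ?_⟩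
  · simp only [Function.update_apply]
    split_ifs
    exacts [ft hk, fs hk, H.fourBraid p hk hp]
  · simp only [Function.update_apply]
    split_ifs
    exacts [comm_left hp hpk ht, comm_left hp hpk hs, H.comm_twist p q hp hpk hq]
  · simp only [Function.update_apply]
    split_ifs
    all_goals first
      | omega
      | exact hst hk
      | exact unlinked_before hk (by omega) ‹_›
      | exact unlinked_after hk (by omega) hq ‹_›
      | exact H.unlinked p q hk hpq hq

/-- The Hurwitz move `(s, t) ↦ (t, t⁻¹ * s * t)` at the positions `i`, `i + 1` of a sequence. -/
def hurwitz (τ : ℕ → A) (i : ℕ) : ℕ → A :=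
  Function.update (Function.update τ i (τ (i + 1))) (i + 1) ((τ (i + 1))⁻¹ * τ i * τ (i + 1))

/-- The inverse Hurwitz move `(s, t) ↦ (s * t * s⁻¹, s)` at the positions `i`, `i + 1`. -/
def hurwitzInv (τ : ℕ → A) (i : ℕ) : ℕ → A :=
  Function.update (Function.update τ i (τ i * τ (i + 1) * (τ i)⁻¹)) (i + 1) (τ i)

theorem hurwitz_self (τ : ℕ → A) (i : ℕ) : hurwitz τ i i = τ (i + 1) := by
  simp [hurwitz]

theorem hurwitz_succ (τ : ℕ → A) (i : ℕ) :
    hurwitz τ i (i + 1) = (τ (i + 1))⁻¹ * τ i * τ (i + 1) :=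
  Function.update_self ..

theorem hurwitz_of_ne {i p : ℕ} (hi : p ≠ i) (hi' : p ≠ i + 1) : hurwitz τ i p = τ p := by
  rw [hurwitz, Function.update_of_ne hi', Function.update_of_ne hi]

theorem hurwitzInv_self (τ : ℕ → A) (i : ℕ) :
    hurwitzInv τ i i = τ i * τ (i + 1) * (τ i)⁻¹ := by
  simp [hurwitzInv]

theorem hurwitzInv_succ (τ : ℕ → A) (i : ℕ) : hurwitzInv τ i (i + 1) = τ i :=
  Function.update_self ..

theorem hurwitzInv_of_ne {i p : ℕ} (hi : p ≠ i) (hi' : p ≠ i + 1) : hurwitzInv τ i p = τ p := by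
  rw [hurwitzInv, Function.update_of_ne hi', Function.update_of_ne hi]

theorem HandlebodyRel.hurwitz (H : HandlebodyRel g k β τ) {i : ℕ} (hi : i + 1 < g) :
    HandlebodyRel g k β (hurwitz τ i) := by
  have hs : τ i ∈ Subgroup.closure {τ i, τ (i + 1)} := Subgroup.subset_closure (by simp)
  have ht : τ (i + 1) ∈ Subgroup.closure {τ i, τ (i + 1)} := Subgroup.subset_closure (by simp)
  have fs (hk : 0 < k) := H.fourBraid i hk (by omega)
  have ft (hk : 0 < k) := H.fourBraid (i + 1) hk hi
  have hst (hk : 0 < k) := H.unlinked i (i + 1) hk (by omega) hi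
  exact H.update_pair hi ht (mul_mem (mul_mem (inv_mem ht) hs) ht) ft
    (fun hk => (fs hk).hurwitz (ft hk) (hst hk)) fun hk => (hst hk).hurwitz (ft hk)

theorem HandlebodyRel.hurwitzInv (H : HandlebodyRel g k β τ) {i : ℕ} (hi : i + 1 < g) :
    HandlebodyRel g k β (hurwitzInv τ i) := by
  have hs : τ i ∈ Subgroup.closure {τ i, τ (i + 1)} := Subgroup.subset_closure (by simp)
  have ht : τ (i + 1) ∈ Subgroup.closure {τ i, τ (i + 1)} := Subgroup.subset_closure (by simp)
  have fs (hk : 0 < k) := H.fourBraid i hk (by omega)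
  have ft (hk : 0 < k) := H.fourBraid (i + 1) hk hi
  have hst (hk : 0 < k) := H.unlinked i (i + 1) hk (by omega) hi
  exact H.update_pair hi (mul_mem (mul_mem hs ht) (inv_mem hs)) hs
    (fun hk => (fs hk).hurwitz_inv (ft hk) (hst hk)) fs fun hk => (hst hk).hurwitz_inv (fs hk)

theorem HandlebodyRel.handleToStrand (H : HandlebodyRel g (k + 1) β τ) :
    HandlebodyRel (g + 1) k (fun i => β (i + 1))
      (fun j => if j = g then β 0 ^ 2 else β 0 * τ j * (β 0)⁻¹) := by
  refine ⟨⟨fun i hi => H.braid _ (by omega), fun i j hij hj => H.comm _ _ (by omega) (by omega)⟩,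
    fun i hk hi => ?_, fun i j hi hk hj => ?_, fun i j hk hij hj => ?_⟩
  · have hb := H.braid 0 (by omega)
    split_ifs
    · exact FourBraid.sq_of_braid hb
    · exact (H.fourBraid i (by omega) (by omega)).conj_of_braid hb
        (H.comm_twist 1 i le_rfl (by omega) (by omega))
  · have h0 := (H.comm 0 (i + 1) (by omega) (by omega)).symm
    split_ifs
    · exact h0.pow_right 2
    · exact (h0.mul_right (H.comm_twist _ _ (by omega) (by omega) (by omega))).mul_right
        h0.inv_right
  · have hτ (p : ℕ) (hp : p < g) : Commute (β 1) (τ p) :=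
      H.comm_twist 1 p le_rfl (by omega) hp
    have h0 := commute_conj_conj_of_braid (H.braid 0 (by omega)) (hτ i (by omega))
    simp only [if_neg (show i ≠ g by omega)]
    split_ifs
    · exact h0.symm.pow_right 2
    · have hj := hτ j (by omega)
      have key := (Commute.conj_iff (β 0)).2 ((Commute.conj_iff (β 1)).2
        (H.unlinked i j (by omega) hij (by omega)))
      rwa [hj.eq, mul_inv_cancel_right, h0.eq, mul_inv_cancel_right] at key

end Relations

section UniversalProperty

variable {P : Type*} [Group P] {g n : ℕ} {β τ : ℕ → P}

/-- The extension by `1` to all of `ℕ` of a family of generators indexed by `Fin d`. -/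
def extendOne {M : Type*} [One M] {d : ℕ} (x : Fin d → M) (i : ℕ) : M :=
  if h : i < d then x ⟨i, h⟩ else 1

theorem extendOne_of_lt {M : Type*} [One M] {d : ℕ} (x : Fin d → M) {i : ℕ} (h : i < d) :
    extendOne x i = x ⟨i, h⟩ :=
  dif_pos h

/-- The braid generators of `H_{g,n}`, indexed by `ℕ`. -/
abbrev natβ (g n : ℕ) : ℕ → HandlebodyBraidGroup g n := extendOne hβ

/-- The twist generators of `H_{g,n}`, indexed by `ℕ`. -/
abbrev natτ (g n : ℕ) : ℕ → HandlebodyBraidGroup g n := extendOne hτ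

/-- The generators of the Artin braid group, indexed by `ℕ`. -/
abbrev natGen (m : ℕ) : ℕ → BraidGroup m := extendOne braidGen

theorem natβ_of_lt {i : ℕ} (hi : i < n - 1) : natβ g n i = hβ ⟨i, hi⟩ :=
  extendOne_of_lt _ hi

theorem natτ_of_lt {j : ℕ} (hj : j < g) : natτ g n j = hτ ⟨j, hj⟩ :=
  extendOne_of_lt _ hj

theorem natGen_of_lt {m i : ℕ} (hi : i < m - 1) : natGen m i = braidGen ⟨i, hi⟩ :=
  extendOne_of_lt _ hi

theorem braidRel_natGen (m : ℕ) : BraidRel (m - 1) (natGen m) where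
  braid i hi := by
    have h : i < m - 1 := by omega
    simp only [natGen_of_lt, hi, h]
    exact PresentedGroup.mk_eq_mk_of_mul_inv_mem ⟨⟨i, h⟩, ⟨i + 1, hi⟩, Or.inl ⟨rfl, rfl⟩⟩
  comm i j hij hj := by
    have h : i < m - 1 := by omega
    simp only [natGen_of_lt, hj, h]
    exact PresentedGroup.mk_eq_mk_of_mul_inv_mem ⟨⟨i, h⟩, ⟨j, hj⟩, Or.inr ⟨hij, rfl⟩⟩

theorem handlebodyRel_natβ_natτ (g n : ℕ) : HandlebodyRel g (n - 1) (natβ g n) (natτ g n) where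
  braid i hi := by
    have h : i < n - 1 := by omega
    simp only [natβ_of_lt, hi, h]
    exact PresentedGroup.mk_eq_mk_of_mul_inv_mem (Or.inl ⟨⟨i, h⟩, ⟨i + 1, hi⟩, Or.inl ⟨rfl, rfl⟩⟩)
  comm i j hij hj := by
    have h : i < n - 1 := by omega
    simp only [natβ_of_lt, hj, h]
    exact PresentedGroup.mk_eq_mk_of_mul_inv_mem (Or.inl ⟨⟨i, h⟩, ⟨j, hj⟩, Or.inr ⟨hij, rfl⟩⟩)
  fourBraid i hk hi := by
    simp only [natβ_of_lt, natτ_of_lt, hk, hi]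
    exact PresentedGroup.mk_eq_mk_of_mul_inv_mem (Or.inr (Or.inl ⟨⟨0, hk⟩, ⟨i, hi⟩, rfl, rfl⟩))
  comm_twist i j h1 hi hj := by
    simp only [natβ_of_lt, natτ_of_lt, hi, hj]
    exact PresentedGroup.mk_eq_mk_of_mul_inv_mem
      (Or.inr (Or.inr (Or.inl ⟨⟨i, hi⟩, ⟨j, hj⟩, h1, rfl⟩)))
  unlinked i j hk hij hj := by
    have h : i < g := by omega
    simp only [natβ_of_lt, natτ_of_lt, hk, h, hj]
    exact PresentedGroup.mk_eq_mk_of_mul_inv_mem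
      (Or.inr (Or.inr (Or.inr ⟨⟨0, hk⟩, ⟨i, h⟩, ⟨j, hj⟩, rfl, hij, rfl⟩)))

/-- The homomorphism from the braid group that sends `s_{i+1}` to `β i`. -/
def BraidRel.lift {m : ℕ} (H : BraidRel (m - 1) β) : BraidGroup m →* P :=
  PresentedGroup.toGroup (rels := braidRels (m - 1)) (f := fun i : Fin (m - 1) => β i) <| by
    rintro r ⟨i, j, ⟨hij, rfl⟩ | ⟨hij, rfl⟩⟩ <;>
      simp only [map_mul, map_inv, FreeGroup.lift_apply_of, mul_inv_eq_one]
    · rw [← hij]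
      exact H.braid _ (by omega)
    · exact H.comm _ _ hij (by omega)

theorem BraidRel.lift_natGen {m : ℕ} (H : BraidRel (m - 1) β) {i : ℕ} (hi : i < m - 1) :
    H.lift (natGen m i) = β i := by
  rw [natGen_of_lt hi]
  exact PresentedGroup.toGroup.of _

/-- The homomorphism from `H_{g,n}` that sends `β_{i+1}` to `β i` and `τ_{j+1}` to `τ j`. -/
def HandlebodyRel.lift (H : HandlebodyRel g (n - 1) β τ) : HandlebodyBraidGroup g n →* P :=
  PresentedGroup.toGroup (rels := handlebodyRels g n)
    (f := Sum.elim (fun i : Fin (n - 1) => β i) fun j : Fin g => τ j) <| by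
    rintro r (⟨i, j, ⟨hij, rfl⟩ | ⟨hij, rfl⟩⟩ | ⟨b, i, hb, rfl⟩ | ⟨b, j, hb, rfl⟩ |
      ⟨b, i, j, hb, hij, rfl⟩) <;>
      simp only [map_mul, map_inv, FreeGroup.lift_apply_of, Sum.elim_inl, Sum.elim_inr,
        mul_inv_eq_one]
    · rw [← hij]
      exact H.braid _ (by omega)
    · exact H.comm _ _ hij (by omega)
    · rw [hb]
      exact H.fourBraid _ (by omega) i.2
    · exact H.comm_twist _ _ hb b.2 j.2
    · rw [hb]
      exact H.unlinked _ _ (by omega) hij j.2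

theorem HandlebodyRel.lift_natβ (H : HandlebodyRel g (n - 1) β τ) {i : ℕ} (hi : i < n - 1) :
    H.lift (natβ g n i) = β i := by
  rw [natβ_of_lt hi]
  exact PresentedGroup.toGroup.of _

theorem HandlebodyRel.lift_natτ (H : HandlebodyRel g (n - 1) β τ) {j : ℕ} (hj : j < g) :
    H.lift (natτ g n j) = τ j := by
  rw [natτ_of_lt hj]
  exact PresentedGroup.toGroup.of _

theorem handlebodyBraidGroup_hom_ext {f f' : HandlebodyBraidGroup g n →* P}
    (hfβ : ∀ i < n - 1, f (natβ g n i) = f' (natβ g n i))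
    (hfτ : ∀ j < g, f (natτ g n j) = f' (natτ g n j)) : f = f' := by
  apply PresentedGroup.ext
  rintro (⟨i, hi⟩ | ⟨j, hj⟩)
  · have h := hfβ i hi
    rwa [natβ_of_lt hi] at h
  · have h := hfτ j hj
    rwa [natτ_of_lt hj] at h

theorem closure_natβ_natτ (g n : ℕ) :
    Subgroup.closure (natβ g n '' Set.Iio (n - 1) ∪ natτ g n '' Set.Iio g) = ⊤ := by
  rw [← top_le_iff, ← PresentedGroup.closure_range_of, Subgroup.closure_le]
  rintro _ ⟨⟨i, hi⟩ | ⟨j, hj⟩, rfl⟩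
  · exact Subgroup.subset_closure (Or.inl ⟨i, hi, natβ_of_lt hi⟩)
  · exact Subgroup.subset_closure (Or.inr ⟨j, hj, natτ_of_lt hj⟩)

theorem exists_injective_handlebodyBraidGroup_zero (m : ℕ) :
    ∃ φ : HandlebodyBraidGroup 0 m →* BraidGroup m, Function.Injective φ ∧
      ∀ i < m - 1, φ (natβ 0 m i) = natGen m i := by
  have H : HandlebodyRel 0 (m - 1) (natGen m) (fun _ => 1) :=
    { braidRel_natGen m with
      fourBraid := by omega
      comm_twist := by omega
      unlinked := by omega }
  let ψ : BraidGroup m →* HandlebodyBraidGroup 0 m := (handlebodyRel_natβ_natτ 0 m).toBraidRel.lift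
  have hψ : ψ.comp H.lift = MonoidHom.id _ := by
    refine handlebodyBraidGroup_hom_ext (fun i hi => ?_) (by omega)
    rw [MonoidHom.comp_apply, H.lift_natβ hi, BraidRel.lift_natGen _ hi, MonoidHom.id_apply]
  exact ⟨H.lift, Function.LeftInverse.injective (g := ψ) (DFunLike.congr_fun hψ),
    fun i hi => H.lift_natβ hi⟩

end UniversalProperty

section LoopPush

variable {g n : ℕ}

theorem lift_hurwitz_comp_lift_hurwitzInv {i : ℕ} (hi : i + 1 < g) :
    ((handlebodyRel_natβ_natτ g n).hurwitz hi).lift.comp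
      ((handlebodyRel_natβ_natτ g n).hurwitzInv hi).lift = MonoidHom.id _ := by
  have hi' : i < g := by omega
  refine handlebodyBraidGroup_hom_ext (fun p hp => ?_) fun p hp => ?_
  · simp only [MonoidHom.comp_apply, HandlebodyRel.lift_natβ _ hp, MonoidHom.id_apply]
  rw [MonoidHom.comp_apply, HandlebodyRel.lift_natτ _ hp, MonoidHom.id_apply]
  rcases eq_or_ne p i with rfl | hpi
  · simp only [hurwitzInv_self, map_mul, map_inv, HandlebodyRel.lift_natτ _ hi,
      HandlebodyRel.lift_natτ _ hp, hurwitz_self, hurwitz_succ]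
    group
  rcases eq_or_ne p (i + 1) with rfl | hpi'
  · rw [hurwitzInv_succ, HandlebodyRel.lift_natτ _ hi', hurwitz_self]
  · rw [hurwitzInv_of_ne hpi hpi', HandlebodyRel.lift_natτ _ hp, hurwitz_of_ne hpi hpi']

theorem lift_hurwitzInv_comp_lift_hurwitz {i : ℕ} (hi : i + 1 < g) :
    ((handlebodyRel_natβ_natτ g n).hurwitzInv hi).lift.comp
      ((handlebodyRel_natβ_natτ g n).hurwitz hi).lift = MonoidHom.id _ := by
  have hi' : i < g := by omega
  refine handlebodyBraidGroup_hom_ext (fun p hp => ?_) fun p hp => ?_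
  · simp only [MonoidHom.comp_apply, HandlebodyRel.lift_natβ _ hp, MonoidHom.id_apply]
  rw [MonoidHom.comp_apply, HandlebodyRel.lift_natτ _ hp, MonoidHom.id_apply]
  rcases eq_or_ne p i with rfl | hpi
  · rw [hurwitz_self, HandlebodyRel.lift_natτ _ hi, hurwitzInv_succ]
  rcases eq_or_ne p (i + 1) with rfl | hpi'
  · simp only [hurwitz_succ, map_mul, map_inv, HandlebodyRel.lift_natτ _ hi',
      HandlebodyRel.lift_natτ _ hp, hurwitzInv_self, hurwitzInv_succ]
    group
  · rw [hurwitz_of_ne hpi hpi', HandlebodyRel.lift_natτ _ hp, hurwitzInv_of_ne hpi hpi']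

/-- The automorphism of `H_{g,n}` given by the Hurwitz move at `τ_{i+1}`, `τ_{i+2}`. -/
def hurwitzAut (n : ℕ) {i : ℕ} (hi : i + 1 < g) : MulAut (HandlebodyBraidGroup g n) :=
  MonoidHom.toMulEquiv ((handlebodyRel_natβ_natτ g n).hurwitz hi).lift
    ((handlebodyRel_natβ_natτ g n).hurwitzInv hi).lift
    (lift_hurwitzInv_comp_lift_hurwitz hi) (lift_hurwitz_comp_lift_hurwitzInv hi)

theorem hurwitzAut_natβ {i : ℕ} (hi : i + 1 < g) {p : ℕ} (hp : p < n - 1) :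
    hurwitzAut n hi (natβ g n p) = natβ g n p :=
  ((handlebodyRel_natβ_natτ g n).hurwitz hi).lift_natβ hp

theorem hurwitzAut_natτ {i : ℕ} (hi : i + 1 < g) {p : ℕ} (hp : p < g) :
    hurwitzAut n hi (natτ g n p) = hurwitz (natτ g n) i p :=
  ((handlebodyRel_natβ_natτ g n).hurwitz hi).lift_natτ hp

/-- `α` is the automorphism that pushes the loop `τ j` once around the loop `τ g`, as the pure braid
generator `A_{j,g}` does in the Hurwitz action. It is described by the elements that it fixes, the
loops unlinked from the band spanned by `τ j` and `τ g` and the product `τ j * τ g` among them. -/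
structure IsLoopPush {A : Type*} [Group A] (g k j : ℕ) (β τ : ℕ → A) (α : MulAut A) : Prop where
  map_braid : ∀ i < k, α (β i) = β i
  map_of_lt : ∀ i < j, α (τ i) = τ i
  map_between : ∀ i, j < i → i < g → α ((τ g)⁻¹ * τ i * τ g) = (τ g)⁻¹ * τ i * τ g
  map_mul_last : α (τ j * τ g) = τ j * τ g
  map_last : α (τ g) = (τ j * τ g)⁻¹ * τ g * (τ j * τ g)

theorem isLoopPush_hurwitzAut_sq (g n : ℕ) :
    IsLoopPush (g + 1) (n - 1) g (natβ (g + 2) n) (natτ (g + 2) n)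
      (hurwitzAut n (Nat.lt_succ_self (g + 1)) ^ 2) where
  map_braid i hi := by simp only [pow_two, MulAut.mul_apply, hurwitzAut_natβ _ hi]
  map_of_lt i hi := by
    simp only [pow_two, MulAut.mul_apply, hurwitzAut_natτ _ (show i < g + 2 by omega),
      hurwitz_of_ne (show i ≠ g by omega) (show i ≠ g + 1 by omega)]
  map_between := by omega
  map_mul_last := by
    simp only [pow_two, MulAut.mul_apply, map_mul, map_inv,
      hurwitzAut_natτ _ (show g < g + 2 by omega),
      hurwitzAut_natτ _ (show g + 1 < g + 2 by omega), hurwitz_self, hurwitz_succ]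
    group
  map_last := by
    simp only [pow_two, MulAut.mul_apply, map_mul, map_inv,
      hurwitzAut_natτ _ (show g < g + 2 by omega),
      hurwitzAut_natτ _ (show g + 1 < g + 2 by omega), hurwitz_self, hurwitz_succ]
    group

theorem mulAut_inv_mul_mul_apply_eq_iff {A : Type*} [Group A] {σ α : MulAut A} {x y : A} :
    (σ⁻¹ * α * σ) x = y ↔ α (σ x) = σ y :=
  MulEquiv.symm_apply_eq σ

theorem IsLoopPush.hurwitz_conj {j : ℕ} (hj : j + 1 < g)
    {α : MulAut (HandlebodyBraidGroup (g + 1) n)}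
    (hα : IsLoopPush g (n - 1) (j + 1) (natβ (g + 1) n) (natτ (g + 1) n) α) :
    IsLoopPush g (n - 1) j (natβ (g + 1) n) (natτ (g + 1) n)
      ((hurwitzAut n (Nat.lt_succ_of_lt hj))⁻¹ * α * hurwitzAut n (Nat.lt_succ_of_lt hj)) := by
  have σ_self : hurwitzAut n (Nat.lt_succ_of_lt hj) (natτ (g + 1) n j) =
      natτ (g + 1) n (j + 1) := by
    rw [hurwitzAut_natτ _ (by omega), hurwitz_self]
  have σ_of_ne {p : ℕ} (hp : p < g + 1) (hpj : p ≠ j) (hpj' : p ≠ j + 1) :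
      hurwitzAut n (Nat.lt_succ_of_lt hj) (natτ (g + 1) n p) = natτ (g + 1) n p := by
    rw [hurwitzAut_natτ _ hp, hurwitz_of_ne hpj hpj']
  have σ_last := σ_of_ne (p := g) (by omega) (by omega) (by omega)
  constructor <;> simp only [mulAut_inv_mul_mul_apply_eq_iff]
  · intro i hi
    rw [hurwitzAut_natβ _ hi, hα.map_braid i hi]
  · intro i hi
    rw [σ_of_ne (by omega) (by omega) (by omega), hα.map_of_lt i (by omega)]
  · intro i hji hig
    rcases eq_or_ne i (j + 1) with rfl | hi
    · have σ_conj : hurwitzAut n (Nat.lt_succ_of_lt hj)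
          ((natτ (g + 1) n g)⁻¹ * natτ (g + 1) n (j + 1) * natτ (g + 1) n g) =
          (natτ (g + 1) n (j + 1) * natτ (g + 1) n g)⁻¹ * natτ (g + 1) n j *
            (natτ (g + 1) n (j + 1) * natτ (g + 1) n g) := by
        rw [map_mul, map_mul, map_inv, σ_last, hurwitzAut_natτ _ (by omega), hurwitz_succ]
        group
      rw [σ_conj, map_mul, map_mul, map_inv, hα.map_mul_last, hα.map_of_lt j (by omega)]
    · have σ_i := σ_of_ne (p := i) (by omega) (by omega) hi
      simp only [map_mul (hurwitzAut n _), map_inv (hurwitzAut n _), σ_last, σ_i,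
        hα.map_between i (by omega) hig]
  · rw [map_mul (hurwitzAut n _), σ_self, σ_last, hα.map_mul_last]
  · simp only [map_mul (hurwitzAut n _), map_inv (hurwitzAut n _), σ_self, σ_last, hα.map_last]

theorem exists_isLoopPush (n : ℕ) {j : ℕ} (hj : j < g) :
    ∃ α, IsLoopPush g (n - 1) j (natβ (g + 1) n) (natτ (g + 1) n) α := by
  obtain ⟨g, rfl⟩ : ∃ d, g = d + 1 := ⟨g - 1, by omega⟩
  induction Nat.lt_succ_iff.1 hj using Nat.decreasingInduction with
  | self => exact ⟨_, isLoopPush_hurwitzAut_sq g n⟩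
  | of_succ j hj ih =>
    obtain ⟨α, hα⟩ := ih (by omega)
    exact ⟨_, hα.hurwitz_conj (by omega)⟩

end LoopPush

section StrandLoop

variable {A : Type*} [Group A] {g k i j : ℕ} {β τ : ℕ → A} {u z : A}

/-- The loop `β_i ⋯ β_1 z β_1⁻¹ ⋯ β_i⁻¹`, which is `z` moved to the strand `i`. -/
def strandLoop (β : ℕ → A) (z : A) : ℕ → A
  | 0 => z
  | i + 1 => β i * strandLoop β z i * (β i)⁻¹

theorem BraidRel.commute_strandLoop_of_lt (H : BraidRel k β)
    (hz : ∀ p, 1 ≤ p → p < k → Commute (β p) z) (hij : i < j) (hj : j < k) :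
    Commute (β j) (strandLoop β z i) := by
  induction i with
  | zero => exact hz j hij hj
  | succ i ih =>
    have h := (H.comm i j hij hj).symm
    exact (h.mul_right (ih (by omega))).mul_right h.inv_right

theorem BraidRel.commute_strandLoop_of_succ_lt (H : BraidRel k β)
    (hz : ∀ p, 1 ≤ p → p < k → Commute (β p) z) (hij : i + 1 < j) (hj : j ≤ k) :
    Commute (β i) (strandLoop β z j) := by
  induction j, hij using Nat.le_induction with
  | base =>
    exact commute_conj_conj_of_braid (H.braid i hj)
      (H.commute_strandLoop_of_lt hz (Nat.lt_succ_self i) hj)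
  | succ j hij ih =>
    have h := H.comm i j hij hj
    exact (h.mul_right (ih (by omega))).mul_right h.inv_right

theorem BraidRel.fourBraid_strandLoop (H : BraidRel k β)
    (hz : ∀ p, 1 ≤ p → p < k → Commute (β p) z) (hz' : FourBraid (β 0) z) (hi : i < k) :
    FourBraid (β i) (strandLoop β z i) := by
  induction i with
  | zero => exact hz'
  | succ i ih =>
    exact (ih (by omega)).conj_of_braid (H.braid i hi)
      (H.commute_strandLoop_of_lt hz (Nat.lt_succ_self i) hi)

theorem commute_strandLoop_of_unlinked (hu : ∀ p, 1 ≤ p → p < k → Commute (β p) u)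
    (hzu : Unlinked (β 0) z u) (hi : 1 ≤ i) (hik : i ≤ k) : Commute (strandLoop β z i) u := by
  induction i, hi using Nat.le_induction with
  | base => exact hzu
  | succ i hi ih =>
    have h := hu i hi (by omega)
    exact (h.mul_left (ih (by omega))).mul_left h.inv_left

theorem HandlebodyRel.unlinked_last_conj (H : HandlebodyRel (g + 1) k β τ) (hk : 0 < k)
    (hj : j < g) : Unlinked (β 0) (τ g) ((τ g)⁻¹ * τ j * τ g) :=
  (H.unlinked j g hk hj (by omega)).hurwitz (H.fourBraid g hk (by omega))

theorem HandlebodyRel.conj_last (H : HandlebodyRel (g + 1) k β τ) :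
    HandlebodyRel g k β (fun j => (τ g)⁻¹ * τ j * τ g) where
  toBraidRel := H.toBraidRel
  fourBraid j hk hj := (H.fourBraid j hk (by omega)).hurwitz (H.fourBraid g hk (by omega))
    (H.unlinked j g hk hj (by omega))
  comm_twist i j hi hik hj := by
    have hg := H.comm_twist i g hi hik (by omega)
    exact (hg.inv_right.mul_right (H.comm_twist i j hi hik (by omega))).mul_right hg
  unlinked i j hk hij hj := by
    have hlast := H.unlinked_last_conj hk hj
    have hig : Unlinked (β 0) (τ i) (τ g) := H.unlinked i g hk (by omega) (by omega)
    have hi : Unlinked (β 0) (τ i) ((τ g)⁻¹ * τ j * τ g) :=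
      (hig.inv_right.mul_right (H.unlinked i j hk hij (by omega))).mul_right hig
    have conj_mul : β 0 * ((τ g)⁻¹ * τ i * τ g) * (β 0)⁻¹ =
        (β 0 * τ g * (β 0)⁻¹)⁻¹ * (β 0 * τ i * (β 0)⁻¹) * (β 0 * τ g * (β 0)⁻¹) := by group
    rw [Unlinked, conj_mul]
    exact (hlast.inv_left.mul_left hi).mul_left hlast

end StrandLoop

section Action

variable {A : Type*} [Group A] {g k i c : ℕ} {β τ : ℕ → A} {u u' z a : A} {σ σ' : MulAut A}

/-- The factor by which the braid generator `i` multiplies the fibre over the position `c`. -/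
def braidWeight (k : ℕ) (β : ℕ → A) (z : A) (i c : ℕ) : A :=
  if c < i then β (i - 1) else if c = i then 1 else if c = i + 1 then strandLoop β z i
  else if c ≤ k + 1 then β i else 1

/-- The action of the braid generator `i` on the positions `0, …, k + 1` times `A`, in which the
strands `i` and `i + 1` trade places. A braid generator away from the position `c` acts on the fibre
over `c` by the generator of `A` that is left after the strand `c` is deleted. Positions are natural
numbers, and those from `k + 2` on stay fixed. -/
def braidPerm (k : ℕ) (β : ℕ → A) (z : A) (i : ℕ) : Equiv.Perm (ℕ × A) :=
  Equiv.prodShear (Equiv.swap i (i + 1)) fun c => Equiv.mulLeft (braidWeight k β z i c)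

/-- The action of a twist generator on the positions `0, …, k + 1` times `A`: by an automorphism `σ`
over the position `0`, by left multiplication by `u` over the others. -/
def twistPerm (k : ℕ) (σ : MulAut A) (u : A) : Equiv.Perm (ℕ × A) :=
  Equiv.prodShear (Equiv.refl ℕ) fun c =>
    if c = 0 then σ.toEquiv else if c ≤ k + 1 then Equiv.mulLeft u else Equiv.refl A

theorem braidPerm_of_lt (h : c < i) : braidPerm k β z i (c, a) = (c, β (i - 1) * a) := by
  simp [braidPerm, braidWeight, h, Equiv.swap_apply_of_ne_of_ne, h.ne, show c ≠ i + 1 by omega]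

theorem braidPerm_of_eq (h : c = i) : braidPerm k β z i (c, a) = (i + 1, a) := by
  simp [braidPerm, braidWeight, h]

theorem braidPerm_of_eq_succ (h : c = i + 1) :
    braidPerm k β z i (c, a) = (i, strandLoop β z i * a) := by
  simp [braidPerm, braidWeight, h]

theorem braidPerm_of_succ_lt (h : i + 1 < c) (hc : c ≤ k + 1) :
    braidPerm k β z i (c, a) = (c, β i * a) := by
  have h₁ : c ≠ i := by omega
  simp [braidPerm, braidWeight, h₁, h.ne', hc, Equiv.swap_apply_of_ne_of_ne,
    show ¬c < i by omega]

theorem braidPerm_of_gt (h : i + 1 < c) (hc : k + 1 < c) :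
    braidPerm k β z i (c, a) = (c, a) := by
  have h₁ : c ≠ i := by omega
  simp [braidPerm, braidWeight, h₁, h.ne', hc.not_ge, Equiv.swap_apply_of_ne_of_ne,
    show ¬c < i by omega]

theorem braidPerm_zero_inv_zero : (braidPerm k β z 0)⁻¹ (0, a) = (1, z⁻¹ * a) := by
  rw [Equiv.Perm.inv_eq_iff_eq, braidPerm_of_eq_succ rfl, strandLoop, mul_inv_cancel_left]

theorem braidPerm_zero_inv_one : (braidPerm k β z 0)⁻¹ (1, a) = (0, a) := by
  rw [Equiv.Perm.inv_eq_iff_eq, braidPerm_of_eq rfl]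

theorem braidPerm_zero_inv_of_one_lt (h : 1 < c) (hc : c ≤ k + 1) :
    (braidPerm k β z 0)⁻¹ (c, a) = (c, (β 0)⁻¹ * a) := by
  rw [Equiv.Perm.inv_eq_iff_eq, braidPerm_of_succ_lt h hc, mul_inv_cancel_left]

theorem braidPerm_zero_inv_of_gt (h : 1 < c) (hc : k + 1 < c) :
    (braidPerm k β z 0)⁻¹ (c, a) = (c, a) := by
  rw [Equiv.Perm.inv_eq_iff_eq, braidPerm_of_gt h hc]

theorem twistPerm_zero : twistPerm k σ u (0, a) = (0, σ a) :=
  rfl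

theorem twistPerm_of_pos (h : 1 ≤ c) (hc : c ≤ k + 1) :
    twistPerm k σ u (c, a) = (c, u * a) := by
  simp [twistPerm, hc, show c ≠ 0 by omega]

theorem twistPerm_of_gt (h : k + 1 < c) : twistPerm k σ u (c, a) = (c, a) := by
  simp [twistPerm, h.not_ge, show c ≠ 0 by omega]

theorem braidPerm_braid (H : BraidRel k β) (hz : ∀ p, 1 ≤ p → p < k → Commute (β p) z)
    (hz' : 0 < k → FourBraid (β 0) z) (hi : i < k) :
    braidPerm k β z i * braidPerm k β z (i + 1) * braidPerm k β z i =
      braidPerm k β z (i + 1) * braidPerm k β z i * braidPerm k β z (i + 1) := by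
  ext1 ⟨c, a⟩
  simp only [Equiv.Perm.mul_apply]
  obtain h | rfl | rfl | rfl | ⟨h, hc⟩ | ⟨h, hc⟩ : c < i ∨ c = i ∨ c = i + 1 ∨ c = i + 2 ∨
    i + 2 < c ∧ c ≤ k + 1 ∨ i + 2 < c ∧ k + 1 < c := by omega
  · have hβ := H.braid (i - 1) (by omega)
    rw [show i - 1 + 1 = i by omega] at hβ
    simp (disch := omega) only [braidPerm_of_lt, Nat.add_sub_cancel, ← mul_assoc, hβ]
  · simp (disch := omega) only [braidPerm_of_lt, braidPerm_of_eq, braidPerm_of_succ_lt,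
      Nat.add_sub_cancel]
  · simp (disch := omega) only [braidPerm_of_lt, braidPerm_of_eq, braidPerm_of_eq_succ,
      braidPerm_of_succ_lt, Nat.add_sub_cancel, strandLoop, mul_assoc, inv_mul_cancel_left]
  · have hloop : FourBraid (β i) (strandLoop β z i) := H.fourBraid_strandLoop hz (hz' (by omega)) hi
    have key := congrArg (· * ((β i)⁻¹ * a)) hloop
    simp only [mul_assoc, mul_inv_cancel_left] at key
    simp (disch := omega) only [braidPerm_of_lt, braidPerm_of_eq_succ,
      braidPerm_of_succ_lt, Nat.add_sub_cancel, strandLoop, mul_assoc, key, inv_mul_cancel_left]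
  · simp (disch := omega) only [braidPerm_of_succ_lt, ← mul_assoc, H.braid i (by omega)]
  · simp (disch := omega) only [braidPerm_of_gt]

theorem commute_braidPerm (H : BraidRel k β) (hz : ∀ p, 1 ≤ p → p < k → Commute (β p) z) {j : ℕ}
    (hij : i + 2 ≤ j) (hj : j ≤ k) : Commute (braidPerm k β z i) (braidPerm k β z j) := by
  ext1 ⟨c, a⟩
  simp only [Equiv.Perm.mul_apply]
  obtain h | rfl | rfl | ⟨h, hc⟩ | rfl | rfl | ⟨h, hc⟩ | ⟨h, hc⟩ : c < i ∨ c = i ∨ c = i + 1 ∨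
    i + 1 < c ∧ c < j ∨ c = j ∨ c = j + 1 ∨ j + 1 < c ∧ c ≤ k + 1 ∨ j + 1 < c ∧ k + 1 < c := by
    omega
  · simp (disch := omega) only [braidPerm_of_lt,
      (H.comm (i - 1) (j - 1) (by omega) (by omega)).left_comm]
  · simp (disch := omega) only [braidPerm_of_lt, braidPerm_of_eq]
  · simp (disch := omega) only [braidPerm_of_lt, braidPerm_of_eq_succ,
      (H.commute_strandLoop_of_lt hz (show i < j - 1 by omega) (by omega)).left_comm]
  · simp (disch := omega) only [braidPerm_of_lt, braidPerm_of_succ_lt,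
      (H.comm i (j - 1) (by omega) (by omega)).left_comm]
  · simp (disch := omega) only [braidPerm_of_eq, braidPerm_of_succ_lt]
  · simp (disch := omega) only [braidPerm_of_eq_succ, braidPerm_of_succ_lt,
      (H.commute_strandLoop_of_succ_lt hz (show i + 1 < j by omega) hj).left_comm]
  · simp (disch := omega) only [braidPerm_of_succ_lt,
      (H.comm i j (by omega) (by omega)).left_comm]
  · simp (disch := omega) only [braidPerm_of_gt]

theorem fourBraid_braidPerm_twistPerm (hz : σ z = u⁻¹ * z * u) (hzu : σ (z * u) = z * u)
    (hu : 0 < k → FourBraid (β 0) u) : FourBraid (braidPerm k β z 0) (twistPerm k σ u) := by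
  ext1 ⟨c, a⟩
  simp only [Equiv.Perm.mul_apply]
  obtain rfl | rfl | ⟨h, hc⟩ | ⟨h, hc⟩ : c = 0 ∨ c = 1 ∨ 1 < c ∧ c ≤ k + 1 ∨ 1 < c ∧ k + 1 < c := by
    omega
  · simp (disch := omega) only [braidPerm_of_eq, braidPerm_of_eq_succ, twistPerm_zero,
      twistPerm_of_pos, strandLoop, zero_add, ← mul_assoc]
    rw [map_mul, hzu]
  · simp (disch := omega) only [braidPerm_of_eq, braidPerm_of_eq_succ, twistPerm_zero,
      twistPerm_of_pos, strandLoop, zero_add, ← mul_assoc]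
    rw [map_mul, hzu, map_mul, hz]
    simp only [mul_assoc, mul_inv_cancel_left]
  · have key := congrArg (· * a) (hu (by omega))
    simp only [mul_assoc] at key
    simp (disch := omega) only [braidPerm_of_succ_lt, twistPerm_of_pos, key]
  · simp (disch := omega) only [braidPerm_of_gt, twistPerm_of_gt]

theorem commute_braidPerm_twistPerm (hi : 1 ≤ i) (hik : i ≤ k) (hσ : σ (β (i - 1)) = β (i - 1))
    (hu : ∀ p, 1 ≤ p → p < k → Commute (β p) u) (hzu : Unlinked (β 0) z u) :
    Commute (braidPerm k β z i) (twistPerm k σ u) := by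
  ext1 ⟨c, a⟩
  simp only [Equiv.Perm.mul_apply]
  obtain rfl | ⟨h, hc⟩ | rfl | rfl | ⟨h, hc⟩ | ⟨h, hc⟩ : c = 0 ∨ 1 ≤ c ∧ c < i ∨ c = i ∨ c = i + 1 ∨
    i + 1 < c ∧ c ≤ k + 1 ∨ i + 1 < c ∧ k + 1 < c := by omega
  · simp (disch := omega) only [braidPerm_of_lt, twistPerm_zero, map_mul, hσ]
  · simp (disch := omega) only [braidPerm_of_lt, twistPerm_of_pos,
      (hu (i - 1) (by omega) (by omega)).left_comm]
  · simp (disch := omega) only [braidPerm_of_eq, twistPerm_of_pos]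
  · simp (disch := omega) only [braidPerm_of_eq_succ, twistPerm_of_pos,
      (commute_strandLoop_of_unlinked hu hzu hi hik).left_comm]
  · simp (disch := omega) only [braidPerm_of_succ_lt, twistPerm_of_pos,
      (hu i hi (by omega)).left_comm]
  · simp (disch := omega) only [braidPerm_of_gt, twistPerm_of_gt]

theorem unlinked_braidPerm_twistPerm (hσ' : σ' (z * u * z⁻¹) = z * u * z⁻¹) (hσ : σ u' = u')
    (hu : 0 < k → Unlinked (β 0) u u') :
    Unlinked (braidPerm k β z 0) (twistPerm k σ u) (twistPerm k σ' u') := by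
  ext1 ⟨c, a⟩
  simp only [Equiv.Perm.mul_apply]
  obtain rfl | rfl | ⟨h, hc⟩ | ⟨h, hc⟩ : c = 0 ∨ c = 1 ∨ 1 < c ∧ c ≤ k + 1 ∨ 1 < c ∧ k + 1 < c := by
    omega
  · simp (disch := omega) only [braidPerm_of_eq_succ, braidPerm_zero_inv_zero, twistPerm_zero,
      twistPerm_of_pos, strandLoop, ← mul_assoc]
    rw [map_mul, hσ']
  · simp (disch := omega) only [braidPerm_of_eq, braidPerm_zero_inv_one, twistPerm_zero,
      twistPerm_of_pos, zero_add, map_mul, hσ]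
  · have key := Commute.left_comm (hu (by omega)) a
    simp only [mul_assoc] at key
    simp (disch := omega) only [braidPerm_of_succ_lt, braidPerm_zero_inv_of_one_lt,
      twistPerm_of_pos, key]
  · simp (disch := omega) only [braidPerm_of_gt, braidPerm_zero_inv_of_gt, twistPerm_of_gt]

theorem HandlebodyRel.braidPerm_twistPerm {α : ℕ → MulAut A} (H : HandlebodyRel (g + 1) k β τ)
    (hα : ∀ j < g, IsLoopPush g k j β τ (α j)) :
    HandlebodyRel g (k + 1) (braidPerm k β (τ g))
      (fun j => twistPerm k (α j) ((τ g)⁻¹ * τ j * τ g)) := by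
  have hz (p : ℕ) (hp : 1 ≤ p) (hpk : p < k) : Commute (β p) (τ g) :=
    H.comm_twist p g hp hpk (by omega)
  have hz' (hk : 0 < k) : FourBraid (β 0) (τ g) := H.fourBraid g hk (by omega)
  have mul_conj (j : ℕ) : τ g * ((τ g)⁻¹ * τ j * τ g) = τ j * τ g := by group
  refine ⟨⟨fun i hi => braidPerm_braid H.toBraidRel hz hz' (by omega),
    fun i j hij hj => commute_braidPerm H.toBraidRel hz hij (by omega)⟩,
    fun j _ hj => ?_, fun i j hi hik hj => ?_, fun i j _ hij hj => ?_⟩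
  · refine fourBraid_braidPerm_twistPerm ?_ ?_ fun hk => H.conj_last.fourBraid j hk hj
    · rw [(hα j hj).map_last]
      group
    · rw [mul_conj, (hα j hj).map_mul_last]
  · exact commute_braidPerm_twistPerm hi (by omega) ((hα j hj).map_braid _ (by omega))
      (fun p hp hpk => H.conj_last.comm_twist p j hp hpk hj) (H.unlinked_last_conj (by omega) hj)
  · refine unlinked_braidPerm_twistPerm ?_ ((hα i (by omega)).map_between j hij hj)
      fun hk => H.conj_last.unlinked i j hk hij hj
    rw [mul_conj, mul_inv_cancel_right, (hα j hj).map_of_lt i hij]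

end Action

section Embedding

theorem injective_of_forall_map_apply_eq {G X : Type*} [Group G] {S : Set G}
    (hS : Subgroup.closure S = ⊤) (f : G →* Equiv.Perm X) {ι : G → X}
    (hι : Function.Injective ι) (hf : ∀ s ∈ S, ∀ x, f s (ι x) = ι (s * x)) :
    Function.Injective f := by
  have key (h : G) : ∀ x, f h (ι x) = ι (h * x) := by
    have hmem : h ∈ Subgroup.closure S := hS ▸ Subgroup.mem_top h
    induction hmem using Subgroup.closure_induction with
    | mem s hs => exact hf s hs
    | one => simp
    | mul s t _ _ hs ht =>
      intro x
      rw [map_mul, Equiv.Perm.mul_apply, ht, hs, mul_assoc]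
    | inv s _ hs =>
      intro x
      rw [map_inv, Equiv.Perm.inv_eq_iff_eq, hs, mul_inv_cancel_left]
  intro s t hst
  exact mul_right_cancel (hι (by rw [← key s 1, ← key t 1, hst]))

/-- The homomorphism `H_{g+1,k+1} → H_{g,k+2}` that turns the last handle into the first strand. -/
def handleToStrand (g k : ℕ) :
    HandlebodyBraidGroup (g + 1) (k + 1) →* HandlebodyBraidGroup g (k + 2) :=
  (handlebodyRel_natβ_natτ g (k + 2)).handleToStrand.lift (n := k + 1)

variable {g k i j : ℕ}

theorem handleToStrand_natβ (hi : i < k) :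
    handleToStrand g k (natβ (g + 1) (k + 1) i) = natβ g (k + 2) (i + 1) :=
  HandlebodyRel.lift_natβ (n := k + 1) _ hi

theorem handleToStrand_natτ_of_lt (hj : j < g) :
    handleToStrand g k (natτ (g + 1) (k + 1) j) =
      natβ g (k + 2) 0 * natτ g (k + 2) j * (natβ g (k + 2) 0)⁻¹ :=
  (HandlebodyRel.lift_natτ (n := k + 1) _ (Nat.lt_succ_of_lt hj)).trans (if_neg hj.ne)

theorem handleToStrand_natτ_last :
    handleToStrand g k (natτ (g + 1) (k + 1) g) = natβ g (k + 2) 0 ^ 2 :=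
  (HandlebodyRel.lift_natτ (n := k + 1) _ (Nat.lt_succ_self g)).trans (if_pos rfl)

theorem handleToStrand_injective (g k : ℕ) : Function.Injective (handleToStrand g k) := by
  choose! α hα using fun j hj => exists_isLoopPush (g := g) (k + 1) (j := j) hj
  have H := (handlebodyRel_natβ_natτ (g + 1) (k + 1)).braidPerm_twistPerm hα
  have lift_β (i : ℕ) (hi : i < k + 1) := H.lift_natβ (n := k + 2) hi
  suffices Function.Injective ((H.lift (n := k + 2)).comp (handleToStrand g k)) from
    Function.Injective.of_comp this
  refine injective_of_forall_map_apply_eq (closure_natβ_natτ (g + 1) (k + 1)) _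
    (Prod.mk_right_injective 0) ?_
  rintro _ (⟨i, hi, rfl⟩ | ⟨j, hj, rfl⟩) a
  · have hi : i < k := hi
    rw [MonoidHom.comp_apply, handleToStrand_natβ hi, lift_β _ (Nat.succ_lt_succ hi)]
    exact braidPerm_of_lt (Nat.succ_pos i)
  · rw [MonoidHom.comp_apply]
    obtain hj | rfl := Nat.lt_succ_iff_lt_or_eq.1 hj
    · rw [handleToStrand_natτ_of_lt hj, map_mul, map_mul, map_inv, lift_β 0 (Nat.succ_pos k),
        H.lift_natτ hj, Equiv.Perm.mul_apply, Equiv.Perm.mul_apply, braidPerm_zero_inv_zero,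
        twistPerm_of_pos le_rfl (by omega), braidPerm_of_eq_succ rfl, strandLoop]
      simp only [mul_assoc, mul_inv_cancel_left]
    · rw [handleToStrand_natτ_last, map_pow, lift_β 0 (Nat.succ_pos k), pow_two,
        Equiv.Perm.mul_apply, braidPerm_of_eq rfl, braidPerm_of_eq_succ rfl, strandLoop]

/-- The word `(s_g ⋯ s_{j+2}) s_{j+1}² (s_g ⋯ s_{j+2})⁻¹` in a sequence with entries
`s i = s_{i+1}`: the strand `g + 1` goes once around the strand `j + 1`. -/
def loopWord {A : Type*} [Group A] (s : ℕ → A) (g j : ℕ) : A :=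
  ((List.range (g - 1 - j)).map fun t => s (g - 1 - t)).prod * s j ^ 2 *
    (((List.range (g - 1 - j)).map fun t => s (g - 1 - t)).prod)⁻¹

theorem loopWord_succ_self {A : Type*} [Group A] (s : ℕ → A) (j : ℕ) :
    loopWord s (j + 1) j = s j ^ 2 := by
  simp [loopWord]

theorem loopWord_succ_of_lt {A : Type*} [Group A] (s : ℕ → A) (hj : j < g) :
    loopWord s (g + 1) j = s g * loopWord s g j * (s g)⁻¹ := by
  have hg : g + 1 - 1 - j = g - 1 - j + 1 := by omega
  have hs (t : ℕ) : s (g - (t + 1)) = s (g - 1 - t) := by congr 1; omega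
  rw [loopWord, hg, List.range_succ_eq_map]
  simp only [loopWord, List.map_cons, List.map_map, List.prod_cons, Function.comp_def,
    Nat.succ_eq_add_one, hs, Nat.add_sub_cancel, Nat.sub_zero, mul_inv_rev, mul_assoc]

theorem exists_injective_handlebodyBraidGroup (g k : ℕ) {m : ℕ} (hm : m = g + (k + 1)) :
    ∃ φ : HandlebodyBraidGroup g (k + 1) →* BraidGroup m, Function.Injective φ ∧
      (∀ i < k, φ (natβ g (k + 1) i) = natGen m (g + i)) ∧
      ∀ j < g, φ (natτ g (k + 1) j) = loopWord (natGen m) g j := by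
  induction g generalizing k with
  | zero =>
    obtain rfl : m = k + 1 := by omega
    obtain ⟨φ, φ_inj, φ_β⟩ := exists_injective_handlebodyBraidGroup_zero (k + 1)
    refine ⟨φ, φ_inj, fun i hi => ?_, by omega⟩
    rw [φ_β i hi, zero_add]
  | succ g ih =>
    obtain ⟨φ, φ_inj, φ_β, φ_τ⟩ := ih (k + 1) (by omega)
    refine ⟨φ.comp (handleToStrand g k), φ_inj.comp (handleToStrand_injective g k),
      fun i hi => ?_, fun j hj => ?_⟩ <;> rw [MonoidHom.comp_apply]
    · rw [handleToStrand_natβ hi, φ_β _ (Nat.succ_lt_succ hi), add_assoc, add_comm 1 i]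
    · have φ_β_zero : φ (natβ g (k + 2) 0) = natGen m g := φ_β 0 (Nat.succ_pos k)
      obtain hj | rfl := Nat.lt_succ_iff_lt_or_eq.1 hj
      · rw [handleToStrand_natτ_of_lt hj, map_mul, map_mul, map_inv, φ_β_zero, φ_τ j hj,
          loopWord_succ_of_lt _ hj]
      · rw [handleToStrand_natτ_last, map_pow, φ_β_zero, loopWord_succ_self]

end Embedding

end HandlebodyBraid

/-- the group homomorphism `φ_{g,n} : H_{g,n} → B_{g+n}` determined by
`β_i ↦ s_{g+i}` (for `1 ≤ i ≤ n-1`) and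
`τ_j ↦ (s_g s_{g-1} ⋯ s_{j+1}) s_j² (s_{j+1}⁻¹ ⋯ s_g⁻¹)` (for `1 ≤ j ≤ g`)
is injective; i.e. `H_{g,n}` embeds as a subgroup of `B_{g+n}`.
(Indices of generators are `0`-based.) -/
theorem handlebody_braid_group_embeds (g n : ℕ) (hn : 1 ≤ n)
    (φ : HandlebodyBraidGroup g n →* BraidGroup (g + n))
    (hφβ : ∀ i : Fin (n - 1), φ (hβ i) = braidGen ⟨g + i.val, by have := i.isLt; omega⟩)
    (hφτ : ∀ j : Fin g,
        φ (hτ j) =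
          (((List.range (g - 1 - j.val)).map
              (fun t => braidGen (m := g + n) ⟨g - 1 - t, by have := j.isLt; omega⟩)).prod) *
            braidGen (m := g + n) ⟨j.val, by have := j.isLt; omega⟩ ^ 2 *
          (((List.range (g - 1 - j.val)).map
              (fun t => braidGen (m := g + n) ⟨g - 1 - t, by have := j.isLt; omega⟩)).prod)⁻¹) :
    Function.Injective φ := by
  obtain ⟨k, rfl⟩ : ∃ k, n = k + 1 := ⟨n - 1, by omega⟩
  obtain ⟨φ', φ'_inj, φ'_β, φ'_τ⟩ := HandlebodyBraid.exists_injective_handlebodyBraidGroup g k rfl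
  suffices φ = φ' by rwa [this]
  have natGen_eq {i : ℕ} (hi : i < g + (k + 1) - 1) :=
    HandlebodyBraid.natGen_of_lt (m := g + (k + 1)) hi
  refine HandlebodyBraid.handlebodyBraidGroup_hom_ext (fun i hi => ?_) fun j hj => ?_
  · rw [φ'_β i hi, HandlebodyBraid.natβ_of_lt hi, natGen_eq (by omega)]
    exact hφβ ⟨i, hi⟩
  · rw [φ'_τ j hj, HandlebodyBraid.natτ_of_lt hj, HandlebodyBraid.loopWord,
      natGen_eq (show j < g + (k + 1) - 1 by omega)]
    simp only [fun t => natGen_eq (show g - 1 - t < g + (k + 1) - 1 by omega)]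
    exact hφτ ⟨j, hj⟩
end

section
/- The Demazure operators ∂_i on R = K[x_1, …, x_N] satisfy: ∂_i ∘ ∂_i = 0 for all 1 ≤ i ≤ N−1; ∂_i ∘ ∂_j = ∂_j ∘ ∂_i whenever |i−j| ≥ 2; and the braid relation ∂_i ∘ ∂_{i+1} ∘ ∂_i = ∂_{i+1} ∘ ∂_i ∘ ∂_{i+1} for all 1 ≤ i ≤ N−2. -/
/-!
STATEMENT 6: the Demazure operators `∂_i` on `R = K[x_1, ..., x_N]` satisfy
`∂_i∂_i = 0`, far-commutativity `∂_i∂_j = ∂_j∂_i` for `|i-j| ≥ 2`, and the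
braid relation `∂_i∂_{i+1}∂_i = ∂_{i+1}∂_i∂_{i+1}`.
-/

open MvPolynomial

/-!
Write `s`, `t` for the transpositions of adjacent variables and `a`, `b` for the corresponding
differences of variables. Since differences of distinct variables are regular, an identity between
compositions of Demazure operators may be checked after multiplying by such differences, and there
both sides become explicit combinations of permuted copies of `f`. For the braid relation, where
`s b = t a = a + b`, both sides multiplied by `a * b * (a + b)` give the antisymmetrization
`f - s f - t f + t (s f) + s (t f) - w f` over the symmetric group on three letters, whose longest
element is `w = s t s = t s t`.
-/

/-- The operator `d` is the divided difference `f ↦ (f - s f) / a`, the common algebraic form of the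
Demazure operators. The defining identity is multiplied out because the base ring has no division;
it determines `d` as soon as `a` is regular. -/
def IsDividedDifference {R : Type*} [CommRing R] (s : R → R) (a : R) (d : R → R) : Prop :=
  ∀ f, a * d f = f - s f

namespace IsDividedDifference

variable {R F G : Type*} [CommRing R] [FunLike F R R] [RingHomClass F R R]
  [FunLike G R R] [RingHomClass G R R] {s : F} {t : G} {a b : R} {d e : R → R}

theorem apply_eq_zero_of_map_eq_self {s : R → R} (hd : IsDividedDifference s a d)
    (ha : IsLeftRegular a) {f : R} (hf : s f = f) : d f = 0 :=
  ha <| calc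
    a * d f = f - s f := hd f
    _ = a * 0 := by rw [hf, sub_self, mul_zero]

theorem map_apply_eq_self (hd : IsDividedDifference s a d) (ha : IsLeftRegular a)
    (hs : Function.Involutive s) (hsa : s a = -a) (f : R) : s (d f) = d f :=
  ha <| calc
    a * s (d f) = -s (a * d f) := by rw [map_mul, hsa, neg_mul, neg_neg]
    _ = f - s f := by rw [hd f, map_sub, hs f, neg_sub]
    _ = a * d f := (hd f).symm

theorem apply_apply_eq_zero (hd : IsDividedDifference s a d) (ha : IsLeftRegular a)
    (hs : Function.Involutive s) (hsa : s a = -a) (f : R) : d (d f) = 0 :=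
  hd.apply_eq_zero_of_map_eq_self ha (hd.map_apply_eq_self ha hs hsa f)

theorem mul_apply_apply_of_map_eq_self {t : R → R} (hd : IsDividedDifference s a d)
    (he : IsDividedDifference t b e) (hsb : s b = b) (f : R) :
    a * b * d (e f) = f - t f - s f + s (t f) :=
  calc
    a * b * d (e f) = b * (a * d (e f)) := by ring
    _ = b * e f - s (b * e f) := by rw [hd, mul_sub, map_mul, hsb]
    _ = f - t f - s f + s (t f) := by rw [he, map_sub]; ring

theorem apply_comm (hd : IsDividedDifference s a d) (he : IsDividedDifference t b e)
    (ha : IsLeftRegular a) (hb : IsLeftRegular b) (hsb : s b = b) (hta : t a = a)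
    (hst : Function.Commute s t) (f : R) : d (e f) = e (d f) :=
  ha.mul hb <| calc
    a * b * d (e f) = f - t f - s f + s (t f) := hd.mul_apply_apply_of_map_eq_self he hsb f
    _ = f - s f - t f + t (s f) := by rw [hst f]; ring
    _ = b * a * e (d f) := (he.mul_apply_apply_of_map_eq_self hd hta f).symm
    _ = a * b * e (d f) := by rw [mul_comm b a]

theorem mul_apply_apply_of_map_eq_add {s : R → R} (hd : IsDividedDifference s a d)
    (he : IsDividedDifference t b e) (hta : t a = a + b) (f : R) :
    a * b * (a + b) * e (d f) = (a + b) * (f - s f) - a * (t f - t (s f)) :=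
  have map_hd : (a + b) * t (d f) = t f - t (s f) := by rw [← hta, ← map_mul, hd, map_sub]
  calc
    a * b * (a + b) * e (d f) = (a + b) * (a * d f) - a * ((a + b) * t (d f)) := by
      linear_combination a * (a + b) * he (d f)
    _ = (a + b) * (f - s f) - a * (t f - t (s f)) := by rw [hd, map_hd]

theorem mul_apply_apply_apply (hd : IsDividedDifference s a d) (he : IsDividedDifference t b e)
    (ha : IsLeftRegular a) (hs : Function.Involutive s) (hsa : s a = -a) (hsb : s b = a + b)
    (hta : t a = a + b) (f : R) :
    a * b * (a + b) * d (e (d f)) = f - s f - t f + t (s f) + s (t f) - s (t (s f)) := by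
  have hed := hd.mul_apply_apply_of_map_eq_add he hta f
  have map_hed : -(a * b * (a + b)) * s (e (d f)) =
      b * (s f - f) + a * (s (t f) - s (t (s f))) := by
    have h := congrArg s hed
    simp only [map_mul, map_sub, map_add, hsa, hsb, hs f] at h
    linear_combination h
  exact ha <| calc
    a * (a * b * (a + b) * d (e (d f))) =
        a * b * (a + b) * e (d f) - a * b * (a + b) * s (e (d f)) := by
      linear_combination a * b * (a + b) * hd (e (d f))
    _ = a * (f - s f - t f + t (s f) + s (t f) - s (t (s f))) := by
      linear_combination hed + map_hed

theorem apply_braid (hd : IsDividedDifference s a d) (he : IsDividedDifference t b e)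
    (ha : IsLeftRegular a) (hb : IsLeftRegular b) (hab : IsLeftRegular (a + b))
    (hs : Function.Involutive s) (ht : Function.Involutive t)
    (hsa : s a = -a) (hsb : s b = a + b) (hta : t a = a + b) (htb : t b = -b)
    (hst : ∀ f, s (t (s f)) = t (s (t f))) (f : R) : d (e (d f)) = e (d (e f)) :=
  (ha.mul hb).mul hab <| calc
    a * b * (a + b) * d (e (d f)) = f - s f - t f + t (s f) + s (t f) - s (t (s f)) :=
      hd.mul_apply_apply_apply he ha hs hsa hsb hta f
    _ = f - t f - s f + s (t f) + t (s f) - t (s (t f)) := by rw [hst]; ring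
    _ = b * a * (b + a) * e (d (e f)) :=
      (he.mul_apply_apply_apply hd hb ht htb (by rw [hta, add_comm])
        (by rw [hsb, add_comm]) f).symm
    _ = a * b * (a + b) * e (d (e f)) := by ring

end IsDividedDifference

theorem isLeftRegular_of_map {M N F : Type*} [Mul M] [Mul N] [FunLike F M N] [MulHomClass F M N]
    {φ : F} (hφ : Function.Injective φ) {a : M} (ha : IsLeftRegular (φ a)) : IsLeftRegular a :=
  fun x y hxy => hφ <| ha <| by simpa only [map_mul] using congrArg φ hxy

theorem aeval_update_X_add_X_injective {σ K : Type*} [DecidableEq σ] [CommRing K] {i j : σ}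
    (hij : i ≠ j) : Function.Injective
      (aeval (R := K) (Function.update X i (X i + X j : MvPolynomial σ K))) := by
  have comp_eq_id : (aeval (Function.update X i (X i - X j))).comp
      (aeval (Function.update X i (X i + X j))) = AlgHom.id K (MvPolynomial σ K) := by
    ext k : 1
    obtain rfl | hk := eq_or_ne k i
    · simp [hij.symm]
    · simp [hk]
  refine Function.LeftInverse.injective (g := aeval (Function.update X i (X i - X j))) fun f => ?_
  simpa only [AlgHom.comp_apply, AlgHom.id_apply] using DFunLike.congr_fun comp_eq_id f

theorem isLeftRegular_X_sub_X {σ K : Type*} [CommRing K] {i j : σ} (hij : i ≠ j) :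
    IsLeftRegular (X i - X j : MvPolynomial σ K) := by
  classical
  -- The substitution `X i ↦ X i + X j` takes `X i - X j` to the variable `X i`.
  refine isLeftRegular_of_map (aeval_update_X_add_X_injective hij) ?_
  rw [map_sub, aeval_X, aeval_X, Function.update_self, Function.update_of_ne hij.symm,
    add_sub_cancel_right]
  exact isRegular_X.left

section RenameSwap

variable {σ K : Type*} [DecidableEq σ] [CommSemiring K]

theorem rename_swap_involutive (i j : σ) :
    Function.Involutive (rename (R := K) (Equiv.swap i j)) := fun f => by
  rw [rename_rename, ← Equiv.Perm.coe_mul, Equiv.swap_mul_self, Equiv.Perm.coe_one,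
    rename_id_apply]

theorem rename_swap_commute {i j k l : σ} (h : [i, j, k, l].Nodup) :
    Function.Commute (rename (R := K) (Equiv.swap i j)) (rename (Equiv.swap k l)) := fun f => by
  rw [rename_rename, rename_rename, ← Equiv.Perm.coe_mul, ← Equiv.Perm.coe_mul,
    (Equiv.Perm.disjoint_swap_swap h).commute.eq]

theorem rename_swap_braid {i j k : σ} (hij : i ≠ j) (hjk : j ≠ k) (hik : i ≠ k)
    (f : MvPolynomial σ K) :
    rename (Equiv.swap i j) (rename (Equiv.swap j k) (rename (Equiv.swap i j) f)) =
      rename (Equiv.swap j k) (rename (Equiv.swap i j) (rename (Equiv.swap j k) f)) := by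
  have swap_braid : Equiv.swap i j * Equiv.swap j k * Equiv.swap i j =
      Equiv.swap j k * Equiv.swap i j * Equiv.swap j k := by
    rw [Equiv.swap_mul_swap_mul_swap hij hik, Equiv.swap_comm i j, Equiv.swap_comm j k,
      Equiv.swap_mul_swap_mul_swap hjk.symm hik.symm, Equiv.swap_comm]
  simp only [rename_rename, ← Equiv.Perm.coe_mul, ← mul_assoc, swap_braid]

end RenameSwap

/-- The operator `d` is the Demazure operator of the variables `X i` and `X j`. The variables need
not be adjacent, so that `∂_i` is the case in which `j` is the successor of `i`. -/
def IsDemazureOperator {σ K : Type*} [DecidableEq σ] [CommRing K] (i j : σ)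
    (d : MvPolynomial σ K → MvPolynomial σ K) : Prop :=
  IsDividedDifference (rename (Equiv.swap i j)) (X i - X j) d

namespace IsDemazureOperator

variable {σ K : Type*} [DecidableEq σ] [CommRing K] {i j k l : σ}
  {d e : MvPolynomial σ K → MvPolynomial σ K}

theorem apply_apply_eq_zero (hd : IsDemazureOperator i j d) (hij : i ≠ j)
    (f : MvPolynomial σ K) : d (d f) = 0 :=
  IsDividedDifference.apply_apply_eq_zero hd (isLeftRegular_X_sub_X hij)
    (rename_swap_involutive i j) (by simp) f

theorem apply_comm (hd : IsDemazureOperator i j d) (he : IsDemazureOperator k l e)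
    (h : [i, j, k, l].Nodup) (f : MvPolynomial σ K) : d (e f) = e (d f) := by
  obtain ⟨⟨hij, hik, hil⟩, ⟨hjk, hjl⟩, hkl⟩ :
      (i ≠ j ∧ i ≠ k ∧ i ≠ l) ∧ (j ≠ k ∧ j ≠ l) ∧ k ≠ l := by simpa using h
  refine IsDividedDifference.apply_comm hd he (isLeftRegular_X_sub_X hij)
    (isLeftRegular_X_sub_X hkl) ?_ ?_ (rename_swap_commute h) f
  · simp [Equiv.swap_apply_of_ne_of_ne, hik.symm, hil.symm, hjk.symm, hjl.symm]
  · simp [Equiv.swap_apply_of_ne_of_ne, hik, hil, hjk, hjl]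

theorem apply_braid (hd : IsDemazureOperator i j d) (he : IsDemazureOperator j k e)
    (hij : i ≠ j) (hjk : j ≠ k) (hik : i ≠ k) (f : MvPolynomial σ K) :
    d (e (d f)) = e (d (e f)) := by
  have swap_k : Equiv.swap i j k = k := Equiv.swap_apply_of_ne_of_ne hik.symm hjk.symm
  have swap_i : Equiv.swap j k i = i := Equiv.swap_apply_of_ne_of_ne hij hik
  have regular_add : IsLeftRegular ((X i - X j) + (X j - X k) : MvPolynomial σ K) := by
    rw [sub_add_sub_cancel]
    exact isLeftRegular_X_sub_X hik
  exact IsDividedDifference.apply_braid hd he (isLeftRegular_X_sub_X hij)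
    (isLeftRegular_X_sub_X hjk) regular_add (rename_swap_involutive i j)
    (rename_swap_involutive j k) (by simp) (by simp [swap_k]) (by simp [swap_i]) (by simp)
    (rename_swap_braid hij hjk hik) f

end IsDemazureOperator

theorem demazure_operators_satisfy_braid_relations_general
    (K : Type*) [CommRing K] (N : ℕ)
    (D : Fin N → MvPolynomial (Fin N) K → MvPolynomial (Fin N) K)
    (hD : ∀ i i' : Fin N, i.val + 1 = i'.val →
      ∀ f, (X i - X i') * D i f = f - rename (⇑(Equiv.swap i i')) f) :
    (∀ i i' : Fin N, i.val + 1 = i'.val → ∀ f, D i (D i f) = 0) ∧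
    (∀ i j : Fin N, i.val + 2 ≤ j.val → j.val + 1 < N →
      ∀ f, D i (D j f) = D j (D i f)) ∧
    (∀ i j : Fin N, i.val + 1 = j.val → j.val + 1 < N →
      ∀ f, D i (D j (D i f)) = D j (D i (D j f))) := by
  have demazure (i i' : Fin N) (hi : i.val + 1 = i'.val) : IsDemazureOperator i i' (D i) :=
    hD i i' hi
  refine ⟨fun i i' hi => (demazure i i' hi).apply_apply_eq_zero (by lia), fun i j hij hj => ?_,
    fun i j hij hj => ?_⟩
  · let i' : Fin N := ⟨i + 1, by lia⟩
    let j' : Fin N := ⟨j + 1, hj⟩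
    have nodup : [i, i', j, j'].Nodup := by grind
    exact (demazure i i' rfl).apply_comm (demazure j j' rfl) nodup
  · let k : Fin N := ⟨j + 1, hj⟩
    have hjk : j.val + 1 = k.val := rfl
    exact (demazure i j hij).apply_braid (demazure j k hjk) (by lia) (by lia) (by lia)

/-- let `D i` be the Demazure operator `∂_{i}` on
`R = K[x_1, ..., x_N]`, characterized (uniquely) by the identity
`(x_i - x_{i+1}) * D i f = f - s_i·f` for all `f`, where `s_i` exchanges the
variables `x_i` and `x_{i+1}`.  Then: `∂_i ∘ ∂_i = 0`; `∂_i ∘ ∂_j = ∂_j ∘ ∂_i`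
whenever `|i - j| ≥ 2`; and `∂_i ∘ ∂_{i+1} ∘ ∂_i = ∂_{i+1} ∘ ∂_i ∘ ∂_{i+1}`.
(Indices are elements of `Fin N`; `i' = i+1` etc.) -/
theorem demazure_operators_satisfy_braid_relations
    (K : Type*) [Field K] [CharZero K] (N : ℕ)
    (D : Fin N → MvPolynomial (Fin N) K → MvPolynomial (Fin N) K)
    (hD : ∀ i i' : Fin N, i.val + 1 = i'.val →
      ∀ f, (X i - X i') * D i f = f - rename (⇑(Equiv.swap i i')) f) :
    (∀ i i' : Fin N, i.val + 1 = i'.val → ∀ f, D i (D i f) = 0) ∧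
    (∀ i j : Fin N, i.val + 2 ≤ j.val → j.val + 1 < N →
      ∀ f, D i (D j f) = D j (D i f)) ∧
    (∀ i j : Fin N, i.val + 1 = j.val → j.val + 1 < N →
      ∀ f, D i (D j (D i f)) = D j (D i (D j f))) :=
  demazure_operators_satisfy_braid_relations_general K N D hD
end

section
/- Fix 1 ≤ i ≤ N−1 and let F_i and F_i' be the Rouquier complexes of R-bimodules associated to the positive and negative elementary braid. Then both F_i ⊗_R F_i' and F_i' ⊗_R F_i are homotopy equivalent, as complexes of R-bimodules, to the complex consisting of R concentrated in homological degree 0. In particular F_i is invertible in the homotopy category of complexes of R-bimodules, with inverse F_i'. -/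
set_option synthInstance.maxHeartbeats 1000000
set_option maxHeartbeats 1000000

open MvPolynomial TensorProduct

noncomputable section

/-- The polynomial ring `R = K[x_1, ..., x_N]`. -/
abbrev Rp (K : Type) [Field K] (N : ℕ) := MvPolynomial (Fin N) K

variable (K : Type) [Field K] [CharZero K] (N : ℕ)

/-- The invariant ring `R^{s}` of the transposition `s` exchanging `x_i` and `x_j`. -/
def swapInv (i j : Fin N) : Subalgebra K (Rp K N) where
  carrier := {f | rename (⇑(Equiv.swap i j)) f = f}
  mul_mem' := by
    intro a b ha hb
    simp only [Set.mem_setOf_eq, map_mul] at *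
    rw [ha, hb]
  one_mem' := by simp only [Set.mem_setOf_eq, map_one]
  add_mem' := by
    intro a b ha hb
    simp only [Set.mem_setOf_eq, map_add] at *
    rw [ha, hb]
  zero_mem' := by simp only [Set.mem_setOf_eq, map_zero]
  algebraMap_mem' := by
    intro c
    simp [Set.mem_setOf_eq, MvPolynomial.algebraMap_eq]

/-- The Soergel bimodule `B_i = R ⊗_{R^{s_i}} R`. -/
abbrev BS (i j : Fin N) := TensorProduct ↥(swapInv K N i j) (Rp K N) (Rp K N)

/-- The enveloping algebra `S = R ⊗_K R`; an `S`-module is an `R`-bimodule. -/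
abbrev SEnv := TensorProduct K (Rp K N) (Rp K N)

/-- `R` as `S`-module (the regular bimodule) via the multiplication map. -/
instance : Module (SEnv K N) (Rp K N) :=
  (Algebra.TensorProduct.lmul' K (S := Rp K N)).toRingHom.toModule

/-- The canonical `K`-algebra map `S = R ⊗_K R → B_i`, `a ⊗ b ↦ a ⊗ b`. -/
def toBS (i j : Fin N) : SEnv K N →ₐ[K] BS K N i j :=
  Algebra.TensorProduct.productMap
    (Algebra.TensorProduct.includeLeft (S := K))
    ((Algebra.TensorProduct.includeRight).restrictScalars K)

/-- `B_i` as `S`-module: the left `R`-action on the left tensor factor, the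
right `R`-action on the right tensor factor. -/
instance (i j : Fin N) : Module (SEnv K N) (BS K N i j) :=
  (toBS K N i j).toRingHom.toModule

end

/-!
STATEMENT 10: invertibility of Rouquier complexes.  For the two-term complexes
of `R`-bimodules `F_i = (B_i → R)` (degrees 1, 0; differential the
multiplication map) and `F_i' = (R → B_i)` (degrees 0, -1; differential
`f ↦ (1/2)·f·((x_i - x_{i+1}) ⊗ 1 + 1 ⊗ (x_i - x_{i+1}))`), both tensor product
complexes `F_i ⊗_R F_i'` and `F_i' ⊗_R F_i` are homotopy equivalent to the
complex `R` concentrated in homological degree `0`; in particular `F_i` is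
invertible in the homotopy category of complexes of `R`-bimodules, with
inverse `F_i'`.

Below, an `R`-bimodule is a module over `S = R ⊗_K R`; `B_i ⊗_R B_i` is
realized as `T_i = R ⊗_{R^{s_i}} B_i` via `(x ⊗ y) ⊗ (z ⊗ w) ↦ x ⊗ (yz ⊗ w)`,
and the tensor product complexes are realized (using the canonical unitor
identifications `B_i ⊗_R R ≅ B_i ≅ R ⊗_R B_i` and `R ⊗_R R ≅ R`) as
`F_i ⊗_R F_i' = (B_i → T_i × R → B_i)` in degrees 1, 0, -1 (and similarly for
`F_i' ⊗_R F_i`), with the Koszul-sign differentials uniquely determined by the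
formulas below.  A homotopy equivalence with `R` concentrated in degree `0` is
spelled out as the data of chain maps in both directions together with
homotopies; `α/2 = C (2⁻¹) * (X i - X i')` is abbreviated `hlf`. -/

noncomputable section
variable (K : Type) [Field K] [CharZero K] (N : ℕ)

/-- `T_i = R ⊗_{R^{s_i}} B_i`, the model of `B_i ⊗_R B_i`. -/
abbrev TS (i j : Fin N) := TensorProduct ↥(swapInv K N i j) (Rp K N) (BS K N i j)

/-- The canonical `K`-algebra map `S → T_i`, `a ⊗ b ↦ a ⊗ (1 ⊗ b)`. -/
def toTS (i j : Fin N) : SEnv K N →ₐ[K] TS K N i j :=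
  Algebra.TensorProduct.productMap (R := K) (S := TS K N i j)
    (Algebra.TensorProduct.includeLeft (S := K))
    ((Algebra.TensorProduct.includeRight.restrictScalars K :
        BS K N i j →ₐ[K] TS K N i j).comp
      (Algebra.TensorProduct.includeRight.restrictScalars K :
        Rp K N →ₐ[K] BS K N i j))

/-- `T_i = B_i ⊗_R B_i` as `S`-module (`R`-bimodule): left `R`-action on the
leftmost factor, right `R`-action on the rightmost factor. -/
instance (i j : Fin N) : Module (SEnv K N) (TS K N i j) :=
  (toTS K N i j).toRingHom.toModule

/-- Half the root: `α/2 = (x_i - x_j)/2`. -/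
def hlf (i j : Fin N) : Rp K N := C (2⁻¹ : K) * (X i - X j)

end

/-!
Write `C = R^{s_i}` and `h = (x_i - x_{i+1}) / 2`.  The Demazure operator
`∂ f = (f - s_i f) / (x_i - x_{i+1})` is `C`-linear with kernel `C` and `∂ h = 1`, so tensoring
`0 → C → R → C → 0` over `C` on both sides with `R` gives a short exact sequence of bimodules
`0 → B_i --ψ--> B_i ⊗_R B_i --φ--> B_i → 0`, where `ψ (x ⊗ z) = x ⊗ 1 ⊗ z` and
`φ (x ⊗ y ⊗ z) = x ⊗ ∂(y) z`.  In either tensor product complex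
`B_i → (B_i ⊗_R B_i) × R → B_i`, the component of the incoming differential in `B_i ⊗_R B_i`
splits `φ` up to sign, and that of the outgoing one splits `ψ` up to sign.  Gaussian elimination
then cancels both copies of `B_i`, leaving `R`.
-/

section GaussianElimination

variable {S A B T M : Type*} [Semiring S] [AddCommGroup A] [AddCommGroup B] [AddCommGroup T]
  [AddCommGroup M] [Module S A] [Module S B] [Module S T] [Module S M]

/-- The sequence `A --δ₁--> T --δ₀--> B`, placed in degrees `1, 0, -1`, is a complex homotopy
equivalent to `M` concentrated in degree `0`.  Homotopies between endomorphisms of the latter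
vanish, whence the strict equation `p ∘ₗ ι = id`. -/
def IsHomotopyEquivDegreeZero (δ₁ : A →ₗ[S] T) (δ₀ : T →ₗ[S] B) (M : Type*) [AddCommGroup M]
    [Module S M] : Prop :=
  δ₀ ∘ₗ δ₁ = 0 ∧
    ∃ (p : T →ₗ[S] M) (ι : M →ₗ[S] T) (h₁ : T →ₗ[S] A) (h₀ : B →ₗ[S] T),
      p ∘ₗ δ₁ = 0 ∧ δ₀ ∘ₗ ι = 0 ∧
      p ∘ₗ ι = LinearMap.id ∧
      h₁ ∘ₗ δ₁ = LinearMap.id ∧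
      ι ∘ₗ p + δ₁ ∘ₗ h₁ + h₀ ∘ₗ δ₀ = LinearMap.id ∧
      δ₀ ∘ₗ h₀ = LinearMap.id

theorem add_sub_comp_eq_id_of_exact {ψ : B →ₗ[S] T} {φ : T →ₗ[S] A} (hexact : Function.Exact ψ φ)
    {α : A →ₗ[S] T} {μ : T →ₗ[S] B} (hα : φ ∘ₗ α = LinearMap.id) (hμ : μ ∘ₗ ψ = LinearMap.id)
    (t : T) : α (φ t) + ψ (μ t) - ψ (μ (α (φ t))) = t := by
  obtain ⟨b, hb⟩ := (hexact (t - α (φ t))).mp (by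
    rw [map_sub, sub_eq_zero]
    exact (LinearMap.congr_fun hα (φ t)).symm)
  have hψμ : ψ (μ (ψ b)) = ψ b := congrArg ψ (LinearMap.congr_fun hμ b)
  rw [hb, map_sub, map_sub] at hψμ
  rw [add_sub_assoc, hψμ, add_sub_cancel]

theorem isHomotopyEquivDegreeZero_of_exact {ψ : B →ₗ[S] T} {φ : T →ₗ[S] A}
    (hexact : Function.Exact ψ φ) {δ₁ : A →ₗ[S] T × M} {δ₀ : T × M →ₗ[S] B}
    (hδ : δ₀ ∘ₗ δ₁ = 0) (hφ : φ ∘ₗ LinearMap.fst S T M ∘ₗ δ₁ = LinearMap.id)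
    (hψ : (δ₀ ∘ₗ LinearMap.inl S T M) ∘ₗ ψ = LinearMap.id) :
    IsHomotopyEquivDegreeZero δ₁ δ₀ M := by
  set α := LinearMap.fst S T M ∘ₗ δ₁
  set d := LinearMap.snd S T M ∘ₗ δ₁
  set μ := δ₀ ∘ₗ LinearMap.inl S T M
  set d' := δ₀ ∘ₗ LinearMap.inr S T M
  have hδ₁ : δ₁ = α.prod d := rfl
  have hδ₀ : δ₀ = μ.coprod d' := (LinearMap.coprod_comp_inl_inr δ₀).symm
  have hφα (a : A) : φ (α a) = a := LinearMap.congr_fun hφ a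
  have hμψ (b : B) : μ (ψ b) = b := LinearMap.congr_fun hψ b
  have hφψ (b : B) : φ (ψ b) = 0 := hexact.apply_apply_eq_zero b
  have hd (a : A) : d' (d a) = -μ (α a) := by
    rw [eq_neg_iff_add_eq_zero, add_comm]
    simpa [hδ₀, hδ₁] using LinearMap.congr_fun hδ a
  refine ⟨hδ, (-(d ∘ₗ φ)).coprod LinearMap.id, (-(ψ ∘ₗ d')).prod LinearMap.id,
    φ ∘ₗ LinearMap.fst S T M, ψ.prod 0, ?_, ?_, ?_, ?_, ?_, ?_⟩
  · ext a; simp [hδ₁, hφα]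
  · ext m; simp [hδ₀, hμψ]
  · ext m; simp [hφψ]
  · ext a; simp [hδ₁, hφα]
  · have hid (t : T) := add_sub_comp_eq_id_of_exact hexact hφ hψ t
    ext x
    · simpa [hδ₀, hδ₁, hd, sub_eq_neg_add, add_assoc] using hid x
    · simp [hδ₀, hδ₁]
    · simp [hδ₀, hδ₁]
    · simp [hδ₀, hδ₁]
  · ext b; simp [hδ₀, hμψ]

end GaussianElimination

section ShortExact

variable {C A : Type*} [CommRing C] [Ring A] [Algebra C A] {f : A →ₗ[C] C}

theorem exact_mk_one_lid_rTensor (hexact : Function.Exact (Algebra.linearMap C A) f)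
    (hsurj : Function.Surjective f) (M : Type*) [AddCommGroup M] [Module C M] :
    Function.Exact (TensorProduct.mk C A M 1)
      ((TensorProduct.lid C M).toLinearMap ∘ₗ f.rTensor M) := by
  have hmk : (Algebra.linearMap C A).rTensor M ∘ₗ (TensorProduct.lid C M).symm.toLinearMap =
      TensorProduct.mk C A M 1 := by
    ext m; simp
  rw [← hmk, LinearEquiv.precomp_exact_iff_exact, LinearEquiv.postcomp_exact_iff_exact]
  exact rTensor_exact M hexact hsurj

end ShortExact

section Bimodule

variable {K A B M P : Type*} [CommSemiring K] [Semiring A] [Semiring B] [Algebra K A]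
  [Algebra K B] [AddCommMonoid M] [AddCommMonoid P] [Module (A ⊗[K] B) M] [Module (A ⊗[K] B) P]
  {F : Type*} [FunLike F M P] [AddMonoidHomClass F M P]

/-- An additive map commuting with the actions of pure tensors, as a linear map over `A ⊗ B`; for
commutative `A = B` these are the bimodule maps. -/
def linearMapOfTmulSMul (f : F)
    (hf : ∀ (a : A) (b : B) (m : M), f ((a ⊗ₜ[K] b) • m) = (a ⊗ₜ[K] b) • f m) :
    M →ₗ[A ⊗[K] B] P where
  toFun := f
  map_add' := map_add f
  map_smul' s m := by
    rw [RingHom.id_apply]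
    induction s with
    | zero => simp
    | tmul a b => exact hf a b m
    | add s t hs ht => simp only [add_smul, map_add, hs, ht]

end Bimodule

section Demazure

theorem X_sub_X_dvd_sub_rename_swap {R σ : Type*} [CommRing R] [DecidableEq σ] (i j : σ)
    (f : MvPolynomial σ R) : X i - X j ∣ f - rename (Equiv.swap i j) f := by
  rw [← Ideal.mem_span_singleton, ← Ideal.Quotient.eq]
  set I := Ideal.span {(X i - X j : MvPolynomial σ R)}
  have hX : Ideal.Quotient.mk I (X i) = Ideal.Quotient.mk I (X j) :=
    Ideal.Quotient.eq.mpr (Ideal.mem_span_singleton_self _)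
  suffices h : Ideal.Quotient.mkₐ R I = (Ideal.Quotient.mkₐ R I).comp (rename (Equiv.swap i j)) from
    DFunLike.congr_fun h f
  ext k
  rcases eq_or_ne k i with rfl | hki
  · simpa using hX
  rcases eq_or_ne k j with rfl | hkj
  · simpa using hX.symm
  · simp [Equiv.swap_apply_of_ne_of_ne hki hkj]

theorem X_sub_X_ne_zero {R σ : Type*} [CommRing R] [Nontrivial R] {i j : σ} (hij : i ≠ j) :
    (X i - X j : MvPolynomial σ R) ≠ 0 :=
  sub_ne_zero.mpr fun h => hij (X_injective h)

variable {K : Type} [Field K] {N : ℕ} {i j : Fin N}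

theorem mem_swapInv {f : Rp K N} : f ∈ swapInv K N i j ↔ rename (Equiv.swap i j) f = f :=
  Iff.rfl

theorem exists_swapInv_mul_eq_sub_rename_swap (hij : i ≠ j) (f : Rp K N) :
    ∃ q : swapInv K N i j, (q : Rp K N) * (X i - X j) = f - rename (Equiv.swap i j) f := by
  obtain ⟨q, hq⟩ := X_sub_X_dvd_sub_rename_swap i j f
  have hswap : rename (Equiv.swap i j) f - f =
      (X j - X i) * rename (Equiv.swap i j) q := by
    simpa [rename_rename, ← Equiv.coe_trans] using congrArg (rename (Equiv.swap i j)) hq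
  have hq_inv : rename (Equiv.swap i j) q = q := by
    refine mul_right_cancel₀ (X_sub_X_ne_zero hij) ?_
    linear_combination hq + hswap
  exact ⟨⟨q, mem_swapInv.mpr hq_inv⟩, by rw [hq, mul_comm]⟩

/-- The Demazure operator `∂ f = (f - s f) / (x_i - x_j)` with `s` the transposition of `x_i` and
`x_j`, as a linear map into the `s`-invariants. -/
noncomputable def demazure (hij : i ≠ j) : Rp K N →ₗ[swapInv K N i j] swapInv K N i j where
  toFun f := (exists_swapInv_mul_eq_sub_rename_swap hij f).choose
  map_add' f g := by
    have hspec (f : Rp K N) := (exists_swapInv_mul_eq_sub_rename_swap hij f).choose_spec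
    refine Subtype.ext (mul_right_cancel₀ (X_sub_X_ne_zero hij) ?_)
    rw [hspec, Subalgebra.coe_add, add_mul, hspec, hspec, map_add, add_sub_add_comm]
  map_smul' c f := by
    have hspec (f : Rp K N) := (exists_swapInv_mul_eq_sub_rename_swap hij f).choose_spec
    refine Subtype.ext (mul_right_cancel₀ (X_sub_X_ne_zero hij) ?_)
    rw [hspec, RingHom.id_apply, smul_eq_mul, Subalgebra.coe_mul, mul_assoc, hspec,
      Subalgebra.smul_def, smul_eq_mul, map_mul, mem_swapInv.mp c.2, mul_sub]

theorem demazure_mul_X_sub_X (hij : i ≠ j) (f : Rp K N) :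
    (demazure hij f : Rp K N) * (X i - X j) = f - rename (Equiv.swap i j) f :=
  (exists_swapInv_mul_eq_sub_rename_swap hij f).choose_spec

theorem demazure_eq_zero_iff (hij : i ≠ j) {f : Rp K N} :
    demazure hij f = 0 ↔ f ∈ swapInv K N i j := by
  rw [mem_swapInv, eq_comm (b := f), ← sub_eq_zero (b := rename _ f), ← demazure_mul_X_sub_X hij,
    mul_eq_zero_iff_right (X_sub_X_ne_zero hij), ZeroMemClass.coe_eq_zero]

theorem exact_algebraLinearMap_demazure (hij : i ≠ j) :
    Function.Exact (Algebra.linearMap (swapInv K N i j) (Rp K N)) (demazure hij) := fun f => by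
  rw [demazure_eq_zero_iff]
  exact (Set.ext_iff.mp Subtype.range_coe f).symm

theorem demazure_one (hij : i ≠ j) : demazure (K := K) hij 1 = 0 :=
  (demazure_eq_zero_iff hij).mpr (one_mem _)

theorem hlf_add_hlf [NeZero (2 : K)] : hlf K N i j + hlf K N i j = X i - X j := by
  rw [hlf, ← two_mul, ← mul_assoc, ← map_ofNat C 2, ← C_mul, mul_inv_cancel₀ two_ne_zero, C_1,
    one_mul]

theorem rename_swap_hlf : rename (Equiv.swap i j) (hlf K N i j) = -hlf K N i j := by
  simp [hlf, ← mul_neg]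

theorem demazure_hlf [NeZero (2 : K)] (hij : i ≠ j) : demazure hij (hlf K N i j) = 1 := by
  refine Subtype.ext (mul_right_cancel₀ (X_sub_X_ne_zero hij) ?_)
  rw [demazure_mul_X_sub_X, rename_swap_hlf, sub_neg_eq_add, hlf_add_hlf, OneMemClass.coe_one,
    one_mul]

theorem demazure_surjective [NeZero (2 : K)] (hij : i ≠ j) :
    Function.Surjective (demazure (K := K) hij) := fun c =>
  ⟨c • hlf K N i j, by rw [map_smul, demazure_hlf, smul_eq_mul, mul_one]⟩

end Demazure

section Soergel

variable {K : Type} [Field K] {N : ℕ} {i j : Fin N}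

theorem tmul_smul_BS (u v x z : Rp K N) :
    (u ⊗ₜ[K] v : SEnv K N) • (x ⊗ₜ z : BS K N i j) = (u * x) ⊗ₜ (v * z) := by
  change toBS K N i j (u ⊗ₜ v) * (x ⊗ₜ z) = _
  simp [toBS]

theorem tmul_smul_TS (u v x : Rp K N) (b : BS K N i j) :
    (u ⊗ₜ[K] v : SEnv K N) • (x ⊗ₜ b : TS K N i j) =
      (u * x) ⊗ₜ ((1 ⊗ₜ[K] v : SEnv K N) • b) := by
  change toTS K N i j (u ⊗ₜ v) * (x ⊗ₜ b) = _ ⊗ₜ (toBS K N i j (1 ⊗ₜ v) * b)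
  simp [toTS, toBS]

theorem span_one_tmul_one_BS :
    Submodule.span (SEnv K N) {(1 ⊗ₜ 1 : BS K N i j)} = ⊤ := by
  refine eq_top_iff.mpr fun b _ => ?_
  induction b using TensorProduct.induction_on with
  | zero => exact zero_mem _
  | tmul x z =>
    refine Submodule.mem_span_singleton.mpr ⟨x ⊗ₜ z, ?_⟩
    rw [tmul_smul_BS, mul_one, mul_one]
  | add a b ha hb => exact add_mem (ha trivial) (hb trivial)

/-- The right `R`-linear map `R → B_i`, `z ↦ 1 ⊗ z`. -/
noncomputable def oneTmul (K : Type) [Field K] (i j : Fin N) :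
    Rp K N →ₗ[swapInv K N i j] BS K N i j :=
  TensorProduct.mk (swapInv K N i j) (Rp K N) (Rp K N) 1

theorem oneTmul_apply (z : Rp K N) : oneTmul K i j z = 1 ⊗ₜ z :=
  rfl

theorem lTensor_oneTmul_tmul_smul (u v : Rp K N) (b : BS K N i j) :
    (oneTmul K i j).lTensor (Rp K N) ((u ⊗ₜ[K] v : SEnv K N) • b) =
      (u ⊗ₜ[K] v : SEnv K N) • (oneTmul K i j).lTensor (Rp K N) b := by
  induction b using TensorProduct.induction_on with
  | zero => simp only [smul_zero, map_zero]
  | tmul x z =>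
    simp only [tmul_smul_BS, tmul_smul_TS, LinearMap.lTensor_tmul, oneTmul_apply, one_mul]
  | add a b ha hb => simp only [smul_add, map_add, ha, hb]

/-- The bimodule map `B_i → B_i ⊗_R B_i`, `x ⊗ z ↦ x ⊗ 1 ⊗ z`. -/
noncomputable def insertOne (K : Type) [Field K] (i j : Fin N) :
    BS K N i j →ₗ[SEnv K N] TS K N i j :=
  linearMapOfTmulSMul ((oneTmul K i j).lTensor (Rp K N)) lTensor_oneTmul_tmul_smul

theorem insertOne_tmul (x z : Rp K N) :
    insertOne K i j (x ⊗ₜ z) = (x ⊗ₜ (1 ⊗ₜ z) : TS K N i j) :=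
  rfl

/-- The right `R`-linear map `B_i → R`, `y ⊗ z ↦ g y • z`. -/
noncomputable def contract (g : Rp K N →ₗ[swapInv K N i j] swapInv K N i j) :
    BS K N i j →ₗ[swapInv K N i j] Rp K N :=
  (TensorProduct.lid (swapInv K N i j) (Rp K N)).toLinearMap ∘ₗ g.rTensor (Rp K N)

variable (g : Rp K N →ₗ[swapInv K N i j] swapInv K N i j)

theorem contract_tmul (y z : Rp K N) : contract g (y ⊗ₜ z) = g y • z :=
  rfl

theorem contract_one_tmul_smul (v : Rp K N) (b : BS K N i j) :
    contract g ((1 ⊗ₜ[K] v : SEnv K N) • b) = v * contract g b := by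
  induction b using TensorProduct.induction_on with
  | zero => simp only [smul_zero, map_zero, mul_zero]
  | tmul y z => rw [tmul_smul_BS, one_mul, contract_tmul, contract_tmul, mul_smul_comm]
  | add a b ha hb => simp only [smul_add, map_add, mul_add, ha, hb]

theorem lTensor_contract_tmul_smul (u v : Rp K N) (t : TS K N i j) :
    (contract g).lTensor (Rp K N) ((u ⊗ₜ[K] v : SEnv K N) • t) =
      (u ⊗ₜ[K] v : SEnv K N) • (contract g).lTensor (Rp K N) t := by
  induction t using TensorProduct.induction_on with
  | zero => simp only [smul_zero, map_zero]
  | tmul x b =>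
    simp only [tmul_smul_BS, tmul_smul_TS, LinearMap.lTensor_tmul, contract_one_tmul_smul]
  | add s t hs ht => simp only [smul_add, map_add, hs, ht]

/-- The bimodule map `B_i ⊗_R B_i → B_i`, `x ⊗ y ⊗ z ↦ x ⊗ g y • z`. -/
noncomputable def contractMiddle : TS K N i j →ₗ[SEnv K N] BS K N i j :=
  linearMapOfTmulSMul ((contract g).lTensor (Rp K N)) (lTensor_contract_tmul_smul g)

theorem contractMiddle_tmul (x y z : Rp K N) :
    contractMiddle g (x ⊗ₜ (y ⊗ₜ z)) = x ⊗ₜ (g y • z) :=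
  rfl

theorem exact_insertOne_contractMiddle {g : Rp K N →ₗ[swapInv K N i j] swapInv K N i j}
    (hexact : Function.Exact (Algebra.linearMap (swapInv K N i j) (Rp K N)) g)
    (hsurj : Function.Surjective g) : Function.Exact (insertOne K i j) (contractMiddle g) :=
  lTensor_exact (Rp K N) (exact_mk_one_lid_rTensor hexact hsurj (Rp K N))
    ((TensorProduct.lid _ _).surjective.comp (LinearMap.rTensor_surjective _ hsurj))

end Soergel

theorem rouquier_complexes_are_inverse_up_to_homotopy_general {K : Type} [Field K]
    [NeZero (2 : K)] {N : ℕ} {i j : Fin N} (hij : i ≠ j)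
    {δ₁ : BS K N i j →ₗ[SEnv K N] TS K N i j × Rp K N}
    (hδ₁ : ∀ x y : Rp K N,
      δ₁ (x ⊗ₜ y) = (-(x ⊗ₜ ((y * hlf K N i j) ⊗ₜ 1 + y ⊗ₜ hlf K N i j)), x * y))
    {δ₀ : TS K N i j × Rp K N →ₗ[SEnv K N] BS K N i j}
    (hδ₀ : ∀ x y z r : Rp K N,
      δ₀ (x ⊗ₜ (y ⊗ₜ z), r) = (x * y) ⊗ₜ z + (r * hlf K N i j) ⊗ₜ 1 + r ⊗ₜ hlf K N i j)
    {δ'₁ : BS K N i j →ₗ[SEnv K N] TS K N i j × Rp K N}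
    (hδ'₁ : ∀ x y : Rp K N,
      δ'₁ (x ⊗ₜ y) = (hlf K N i j ⊗ₜ (x ⊗ₜ y) + 1 ⊗ₜ ((hlf K N i j * x) ⊗ₜ y), x * y))
    {δ'₀ : TS K N i j × Rp K N →ₗ[SEnv K N] BS K N i j}
    (hδ'₀ : ∀ x y z r : Rp K N,
      δ'₀ (x ⊗ₜ (y ⊗ₜ z), r) =
        -(x ⊗ₜ (y * z)) + (r * hlf K N i j) ⊗ₜ 1 + r ⊗ₜ hlf K N i j) :
    IsHomotopyEquivDegreeZero δ₁ δ₀ (Rp K N) ∧ IsHomotopyEquivDegreeZero δ'₁ δ'₀ (Rp K N) := by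
  have hexact := exact_insertOne_contractMiddle (exact_algebraLinearMap_demazure (K := K) hij)
    (demazure_surjective hij)
  have hexact_neg_right :
      Function.Exact (insertOne K i j) (-contractMiddle (demazure (K := K) hij)) := by
    rwa [LinearMap.exact_iff, LinearMap.ker_neg, ← LinearMap.exact_iff]
  have hexact_neg_left :
      Function.Exact (-insertOne K i j) (contractMiddle (demazure (K := K) hij)) := by
    rwa [LinearMap.exact_iff, LinearMap.range_neg, ← LinearMap.exact_iff]
  have hsplit₁ : δ₁ (1 ⊗ₜ 1) =
      ((-1) ⊗ₜ (hlf K N i j ⊗ₜ 1), 1) + ((-1) ⊗ₜ (1 ⊗ₜ hlf K N i j), 0) := by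
    simp [hδ₁, TensorProduct.tmul_add, TensorProduct.neg_tmul, add_comm]
  have hsplit'₁ : δ'₁ (1 ⊗ₜ 1) =
      (hlf K N i j ⊗ₜ (1 ⊗ₜ 1), 1) + (1 ⊗ₜ (hlf K N i j ⊗ₜ 1), 0) := by
    simp [hδ'₁]
  refine ⟨isHomotopyEquivDegreeZero_of_exact hexact_neg_right ?_ ?_ ?_,
    isHomotopyEquivDegreeZero_of_exact hexact_neg_left ?_ ?_ ?_⟩ <;>
    refine LinearMap.ext_on span_one_tmul_one_BS (Set.eqOn_singleton.mpr ?_)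
  · rw [LinearMap.comp_apply, hsplit₁, map_add, hδ₀, hδ₀]
    simp [TensorProduct.neg_tmul]
  · simp [hsplit₁, contractMiddle_tmul, demazure_one, demazure_hlf, TensorProduct.neg_tmul]
  · simpa [insertOne_tmul] using hδ₀ 1 1 1 0
  · rw [LinearMap.comp_apply, hsplit'₁, map_add, hδ'₀, hδ'₀]
    simp
  · simp [hsplit'₁, contractMiddle_tmul, demazure_one, demazure_hlf]
  · simpa [insertOne_tmul] using congrArg Neg.neg (hδ'₀ 1 1 1 0)

/-- fix `1 ≤ i ≤ N-1` (below `i' = i+1`), and let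
`F_i = (B_i →d R)` (degrees 1, 0) and `F_i' = (R →d' B_i)` (degrees 0, -1) be
the Rouquier complexes of `R`-bimodules, where `d` is the multiplication map
`x ⊗ y ↦ xy` and `d'` is `f ↦ (1/2)·f·((x_i - x_{i'}) ⊗ 1 + 1 ⊗ (x_i - x_{i'}))`.
Then `F_i ⊗_R F_i'`, realized as the complex
`B_i --δ₁--> (B_i ⊗_R B_i) × R --δ₀--> B_i` in degrees 1, 0, -1, and
`F_i' ⊗_R F_i`, realized as `B_i --δ'₁--> (B_i ⊗_R B_i) × R --δ'₀--> B_i`,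
are both complexes (`δ₀ ∘ δ₁ = 0` and `δ'₀ ∘ δ'₁ = 0`) homotopy equivalent, as
complexes of `R`-bimodules, to the complex `R` concentrated in homological
degree `0`.  In particular `F_i` is invertible in the homotopy category of
complexes of `R`-bimodules, with inverse `F_i'`. -/
theorem rouquier_complexes_are_inverse_up_to_homotopy
    (K : Type) [Field K] [CharZero K] (N : ℕ) (i i' : Fin N)
    (hadj : i.val + 1 = i'.val)
    -- differentials of `F_i` and `F_i'`:
    (d : BS K N i i' →ₗ[SEnv K N] Rp K N)
    (hd : ∀ x y : Rp K N, d (x ⊗ₜ y) = x * y)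
    (d' : Rp K N →ₗ[SEnv K N] BS K N i i')
    (hd' : ∀ r : Rp K N, d' r = (r * hlf K N i i') ⊗ₜ 1 + r ⊗ₜ hlf K N i i')
    -- the differentials of `F_i ⊗_R F_i'`:
    (δ₁ : BS K N i i' →ₗ[SEnv K N] TS K N i i' × Rp K N)
    (hδ₁ : ∀ x y : Rp K N,
      δ₁ (x ⊗ₜ y) = (-(x ⊗ₜ ((y * hlf K N i i') ⊗ₜ 1 + y ⊗ₜ hlf K N i i')), x * y))
    (δ₀ : TS K N i i' × Rp K N →ₗ[SEnv K N] BS K N i i')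
    (hδ₀ : ∀ x y z r : Rp K N,
      δ₀ (x ⊗ₜ (y ⊗ₜ z), r) =
        (x * y) ⊗ₜ z + (r * hlf K N i i') ⊗ₜ 1 + r ⊗ₜ hlf K N i i')
    -- the differentials of `F_i' ⊗_R F_i`:
    (δ'₁ : BS K N i i' →ₗ[SEnv K N] TS K N i i' × Rp K N)
    (hδ'₁ : ∀ x y : Rp K N,
      δ'₁ (x ⊗ₜ y) =
        (hlf K N i i' ⊗ₜ (x ⊗ₜ y) + 1 ⊗ₜ ((hlf K N i i' * x) ⊗ₜ y), x * y))
    (δ'₀ : TS K N i i' × Rp K N →ₗ[SEnv K N] BS K N i i')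
    (hδ'₀ : ∀ x y z r : Rp K N,
      δ'₀ (x ⊗ₜ (y ⊗ₜ z), r) =
        -(x ⊗ₜ (y * z)) + (r * hlf K N i i') ⊗ₜ 1 + r ⊗ₜ hlf K N i i') :
    -- `F_i ⊗_R F_i'` is a complex, homotopy equivalent to `R` in degree `0`:
    (δ₀ ∘ₗ δ₁ = 0 ∧
      ∃ (p : TS K N i i' × Rp K N →ₗ[SEnv K N] Rp K N)
        (ι : Rp K N →ₗ[SEnv K N] TS K N i i' × Rp K N)
        (h₁ : TS K N i i' × Rp K N →ₗ[SEnv K N] BS K N i i')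
        (h₀ : BS K N i i' →ₗ[SEnv K N] TS K N i i' × Rp K N),
        p ∘ₗ δ₁ = 0 ∧ δ₀ ∘ₗ ι = 0 ∧
        p ∘ₗ ι = LinearMap.id ∧
        h₁ ∘ₗ δ₁ = LinearMap.id ∧
        ι ∘ₗ p + δ₁ ∘ₗ h₁ + h₀ ∘ₗ δ₀ = LinearMap.id ∧
        δ₀ ∘ₗ h₀ = LinearMap.id) ∧
    -- `F_i' ⊗_R F_i` is a complex, homotopy equivalent to `R` in degree `0`:
    (δ'₀ ∘ₗ δ'₁ = 0 ∧
      ∃ (p : TS K N i i' × Rp K N →ₗ[SEnv K N] Rp K N)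
        (ι : Rp K N →ₗ[SEnv K N] TS K N i i' × Rp K N)
        (h₁ : TS K N i i' × Rp K N →ₗ[SEnv K N] BS K N i i')
        (h₀ : BS K N i i' →ₗ[SEnv K N] TS K N i i' × Rp K N),
        p ∘ₗ δ'₁ = 0 ∧ δ'₀ ∘ₗ ι = 0 ∧
        p ∘ₗ ι = LinearMap.id ∧
        h₁ ∘ₗ δ'₁ = LinearMap.id ∧
        ι ∘ₗ p + δ'₁ ∘ₗ h₁ + h₀ ∘ₗ δ'₀ = LinearMap.id ∧
        δ'₀ ∘ₗ h₀ = LinearMap.id) := by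
  exact rouquier_complexes_are_inverse_up_to_homotopy_general (Fin.ne_of_val_ne (by omega)) hδ₁ hδ₀
    hδ'₁ hδ'₀
end
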